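/- arXiv:1706.02094 — 7 statements merged into one kernel-verified Lean document; each statement's English description precedes it below -/
import Mathlib

section
/- Let Y be a triangulable space, i.e., a compact topological space homeomorphic to the geometric realization |P| of a finite simplicial complex P in some ℝⁿ, and let O ⊆ Y be an open subset. Then every open cover 𝒱 of O has a refinement 𝒰 which is an open cover of O, is locally finite in O, and is a good cover of O (every nonempty intersection of finitely many members of 𝒰 is contractible). -/
open Set Geometry

namespace GoodCoverAux

variable {V : Type} [Fintype V] [DecidableEq V]

/-- abstract realization -/
def real (F : Set (Finset V)) : Set (V → ℝ) :=
  {x | (∀ v, 0 ≤ x v) ∧ ∑ v, x v = 1 ∧ ∃ s ∈ F, ∀ v, v ∉ s → x v = 0}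

/-- normalised restriction -/
noncomputable def restr (ρ : Finset V) (x : V → ℝ) : V → ℝ :=
  fun v => if v ∈ ρ then x v / ∑ w ∈ ρ, x w else 0

def Good (F : Set (Finset V)) (A : Set (V → ℝ)) : Prop :=
  ∃ (σ : Finset V) (C : Set (V → ℝ)), σ.Nonempty ∧ Convex ℝ C ∧ A = real F ∩ C ∧
    (∀ x ∈ A, ∀ v ∈ σ, 0 < x v) ∧ ∀ x ∈ A, ∀ ρ, σ ⊆ ρ → restr ρ x ∈ A

lemma Good.inter {F : Set (Finset V)} {A B : Set (V → ℝ)} (hA : Good F A) (hB : Good F B) :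
    Good F (A ∩ B) := by
  obtain ⟨σ, C, h1, h2, h3, h4, h5⟩ := hA
  obtain ⟨σ', C', h1', h2', h3', h4', h5'⟩ := hB
  refine ⟨σ ∪ σ', C ∩ C', h1.mono Finset.subset_union_left, h2.inter h2', ?_, ?_, ?_⟩
  · rw [h3, h3']; ext; simp only [mem_inter_iff]; tauto
  · intro x hx v hv
    rcases Finset.mem_union.1 hv with hv | hv
    · exact h4 x hx.1 v hv
    · exact h4' x hx.2 v hv
  · intro x hx ρ hρ
    exact ⟨h5 x hx.1 ρ (Finset.subset_union_left.trans hρ),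
      h5' x hx.2 ρ (Finset.subset_union_right.trans hρ)⟩

lemma real_segment {F : Set (Finset V)} {x y : V → ℝ} (hx : x ∈ real F) (hy : y ∈ real F)
    (s : Finset V) (hs : s ∈ F) (hxs : ∀ v, v ∉ s → x v = 0) (hys : ∀ v, v ∉ s → y v = 0)
    {a b : ℝ} (ha : 0 ≤ a) (hb : 0 ≤ b) (hab : a + b = 1) : a • x + b • y ∈ real F := by
  refine ⟨fun v => ?_, ?_, s, hs, fun v hv => by simp [hxs v hv, hys v hv]⟩
  · have := hx.1 v; have := hy.1 v
    simp only [Pi.add_apply, Pi.smul_apply, smul_eq_mul]; positivity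
  · simp only [Pi.add_apply, Pi.smul_apply, smul_eq_mul, Finset.sum_add_distrib, ← Finset.mul_sum,
      hx.2.1, hy.2.1]
    linarith

lemma Good.contractible {F : Set (Finset V)}
    (hF : ∀ s ∈ F, ∀ t ⊆ s, t.Nonempty → t ∈ F) {A : Set (V → ℝ)} (hA : Good F A)
    (hne : A.Nonempty) : ContractibleSpace A := by
  obtain ⟨σ, C, hσ, hC, hAC, hpos, hr⟩ := hA
  obtain ⟨x0, hx0⟩ := hne
  have hsum : ∀ x ∈ A, ∑ w ∈ σ, x w ≠ 0 := fun x hx =>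
    (Finset.sum_pos (fun v hv => hpos x hx v hv) hσ).ne'
  have hAr : ∀ x ∈ A, x ∈ real F := fun x hx => (hAC ▸ hx : x ∈ real F ∩ C).1
  have hAc : ∀ x ∈ A, x ∈ C := fun x hx => (hAC ▸ hx : x ∈ real F ∩ C).2
  have hsub : ∀ x ∈ A, ∀ s : Finset V, (∀ v, v ∉ s → x v = 0) → σ ⊆ s := by
    intro x hx s hs v hv
    by_contra h
    exact (hpos x hx v hv).ne' (hs v h)
  have hσF : σ ∈ F := by
    obtain ⟨-, -, s, hs, h⟩ := hAr x0 hx0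
    exact hF s hs σ (hsub x0 hx0 s h) hσ
  have hrs : ∀ x : V → ℝ, ∀ v, v ∉ σ → restr σ x v = 0 := fun x v hv => by simp [restr, hv]
  have hseg : ∀ x ∈ A, ∀ y ∈ A, ∀ s ∈ F, (∀ v, v ∉ s → x v = 0) → (∀ v, v ∉ s → y v = 0) →
      ∀ t : unitInterval, (1 - (t : ℝ)) • x + (t : ℝ) • y ∈ A := by
    intro x hx y hy s hs h1 h2 t
    have ht0 := t.2.1
    have ht1 := t.2.2
    rw [hAC]
    exact ⟨real_segment (hAr x hx) (hAr y hy) s hs h1 h2 (by linarith) ht0 (by ring),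
      hC (hAc x hx) (hAc y hy) (by linarith) ht0 (by ring)⟩
  have hcont : Continuous fun x : A => restr σ x.1 := by
    refine continuous_pi fun v => ?_
    unfold restr
    by_cases hv : v ∈ σ
    · simp only [hv, if_true]
      exact Continuous.div ((continuous_apply v).comp continuous_subtype_val)
        (continuous_finset_sum _ fun w _ => (continuous_apply w).comp continuous_subtype_val)
        (fun x => hsum x.1 x.2)
    · simp only [hv, if_false]; fun_prop
  let r : C(A, A) := ⟨fun x => ⟨restr σ x.1, hr x.1 x.2 σ subset_rfl⟩,
    hcont.subtype_mk _⟩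
  let p : A := r ⟨x0, hx0⟩
  have hs1 : ∀ x : A, ∃ s ∈ F, (∀ v, v ∉ s → x.1 v = 0) ∧ (∀ v, v ∉ s → (r x).1 v = 0) := by
    intro x
    obtain ⟨-, -, s, hs, h⟩ := hAr x.1 x.2
    exact ⟨s, hs, h, fun v hv => hrs _ _ (fun h' => hv (hsub x.1 x.2 s h h'))⟩
  let H1 : ContinuousMap.Homotopy (ContinuousMap.id A) r :=
    { toFun := fun q => ⟨(1 - (q.1 : ℝ)) • q.2.1 + (q.1 : ℝ) • (r q.2).1, by
        obtain ⟨s, hs, h, h'⟩ := hs1 q.2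
        exact hseg _ q.2.2 _ (r q.2).2 s hs h h' q.1⟩
      continuous_toFun := by fun_prop
      map_zero_left := fun x => by ext; simp
      map_one_left := fun x => by ext; simp }
  let H2 : ContinuousMap.Homotopy r (ContinuousMap.const A p) :=
    { toFun := fun q => ⟨(1 - (q.1 : ℝ)) • (r q.2).1 + (q.1 : ℝ) • p.1,
        hseg _ (r q.2).2 _ p.2 σ hσF (hrs _) (hrs _) q.1⟩
      continuous_toFun := by fun_prop
      map_zero_left := fun x => by ext; simp
      map_one_left := fun x => by ext; simp }
  rw [contractible_iff_id_nullhomotopic]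
  exact ⟨p, ⟨H1.trans H2⟩⟩

lemma good_basis {F : Set (Finset V)} {p : V → ℝ} (hp : p ∈ real F)
    {δ : ℝ} (hδ : 0 < δ) :
    ∃ C : Set (V → ℝ), IsOpen C ∧ p ∈ C ∧ Good F (real F ∩ C) ∧ real F ∩ C ⊆ Metric.ball p δ := by
  let σ : Finset V := Finset.univ.filter fun v => 0 < p v
  have hσpos : ∀ v ∈ σ, 0 < p v := fun v hv => (Finset.mem_filter.1 hv).2
  have hσz : ∀ v, v ∉ σ → p v = 0 := fun v hv =>
    le_antisymm (not_lt.1 fun h => hv (Finset.mem_filter.2 ⟨Finset.mem_univ _, h⟩)) (hp.1 v)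
  have hps : ∑ v ∈ σ, p v = 1 := by
    rw [← hp.2.1]
    exact Finset.sum_subset (Finset.subset_univ _) fun v _ hv => hσz v hv
  have hσ : σ.Nonempty := by
    by_contra h
    rw [Finset.not_nonempty_iff_eq_empty] at h
    simp [h] at hps
  obtain ⟨ε, hε, hε1, hεδ, hεp⟩ : ∃ ε : ℝ, 0 < ε ∧ ε ≤ 1 ∧ 2 * ε ≤ δ ∧ ∀ v ∈ σ, ε ≤ p v := by
    obtain ⟨v0, hv0, hmin⟩ := σ.exists_min_image p hσ
    refine ⟨min (min 1 (δ / 2)) (p v0), ?_, ?_, ?_, ?_⟩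
    · have := hσpos v0 hv0; positivity
    · exact (min_le_left _ _).trans (min_le_left _ _)
    · have : min (min 1 (δ / 2)) (p v0) ≤ δ / 2 := (min_le_left _ _).trans (min_le_right _ _)
      linarith
    · exact fun v hv => (min_le_right _ _).trans (hmin v hv)
  let S : (V → ℝ) → ℝ := fun x => ∑ v ∈ σ, x v
  have hS : Continuous S := by fun_prop
  have hSadd : ∀ a b : ℝ, ∀ x y : V → ℝ, S (a • x + b • y) = a * S x + b * S y := by
    intro a b x y
    simp [S, Finset.sum_add_distrib, Finset.mul_sum]
  let C : Set (V → ℝ) := {x | 1 - ε < S x ∧ ∀ v ∈ σ, |x v - p v * S x| < ε * S x}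
  have hSp : S p = 1 := hps
  have hpos : ∀ x ∈ C, ∀ v ∈ σ, 0 < x v := by
    rintro x ⟨h1, h2⟩ v hv
    have h3 := (abs_lt.1 (h2 v hv)).1
    have h4 := hεp v hv
    nlinarith
  have hS1 : ∀ x ∈ real F, ∀ ρ : Finset V, ∑ v ∈ ρ, x v ≤ 1 := by
    intro x hx ρ
    rw [← hx.2.1]
    exact Finset.sum_le_sum_of_subset_of_nonneg (Finset.subset_univ _) fun v _ _ => hx.1 v
  refine ⟨C, ?_, ?_, ⟨σ, C, hσ, ?_, rfl, fun x hx => hpos x hx.2, ?_⟩, ?_⟩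
  · have : C = {x | 1 - ε < S x} ∩ ⋂ v ∈ σ, {x | |x v - p v * S x| < ε * S x} := by
      ext x; simp [C]
    rw [this]
    refine (isOpen_lt (by fun_prop) hS).inter (isOpen_biInter_finset fun v _ => ?_)
    exact isOpen_lt (by fun_prop) (by fun_prop)
  · refine ⟨by rw [hSp]; linarith, fun v hv => by rw [hSp]; simpa using hε⟩
  · rintro x ⟨hx1, hx2⟩ y ⟨hy1, hy2⟩ a b ha hb hab
    refine ⟨?_, fun v hv => ?_⟩
    · rw [hSadd]
      have hb' : b = 1 - a := by linarith
      have := (convex_Ioi (1 - ε)) hx1 hy1 ha hb hab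
      simpa using this
    · have h1 := abs_lt.1 (hx2 v hv)
      have h2 := abs_lt.1 (hy2 v hv)
      have key1 := (convex_Ioi (0:ℝ)) (show x v - p v * S x + ε * S x ∈ Ioi 0 from by
        simp only [mem_Ioi]; linarith) (show y v - p v * S y + ε * S y ∈ Ioi 0 from by
        simp only [mem_Ioi]; linarith) ha hb hab
      have key2 := (convex_Ioi (0:ℝ)) (show ε * S x - (x v - p v * S x) ∈ Ioi 0 from by
        simp only [mem_Ioi]; linarith) (show ε * S y - (y v - p v * S y) ∈ Ioi 0 from by
        simp only [mem_Ioi]; linarith) ha hb hab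
      simp only [mem_Ioi, smul_eq_mul] at key1 key2
      rw [hSadd, abs_lt]
      simp only [Pi.add_apply, Pi.smul_apply, smul_eq_mul]
      constructor <;> nlinarith
  · rintro x ⟨hx, hxC⟩ ρ hρ
    have hxS : 0 < S x := by have := hxC.1; linarith
    set m := ∑ w ∈ ρ, x w with hm
    have hSm : S x ≤ m := Finset.sum_le_sum_of_subset_of_nonneg hρ fun v _ _ => hx.1 v
    have hm0 : 0 < m := hxS.trans_le hSm
    have hm1 : m ≤ 1 := hS1 x hx ρ
    have hSr : S (restr ρ x) = S x / m := by
      simp only [S, Finset.sum_div]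
      exact Finset.sum_congr rfl fun v hv => by simp [restr, hρ hv, hm]
    refine ⟨⟨fun v => ?_, ?_, ?_⟩, ?_, fun v hv => ?_⟩
    · simp only [restr]
      split_ifs
      · exact div_nonneg (hx.1 v) hm0.le
      · exact le_rfl
    · simp only [restr]
      rw [Finset.sum_ite_mem, Finset.univ_inter, ← Finset.sum_div, ← hm, div_self hm0.ne']
    · obtain ⟨-, -, s, hs, h⟩ := hx
      have hσs : σ ⊆ s := fun v hv => by
        by_contra h'
        exact (hpos x hxC v hv).ne' (h v h')
      refine ⟨s, hs, fun v hv => by simp [restr, h v hv]⟩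
    · rw [hSr]
      refine hxC.1.trans_le ?_
      rw [le_div_iff₀ hm0]
      nlinarith
    · rw [hSr]
      have h1 : restr ρ x v = x v / m := by simp [restr, hρ hv, hm]
      have h2 : x v / m - p v * (S x / m) = (x v - p v * S x) / m := by ring
      rw [h1, h2, abs_div, abs_of_pos hm0, ← mul_div_assoc]
      exact div_lt_div_of_pos_right (hxC.2 v hv) hm0
  · rintro x ⟨hx, hxC⟩
    rw [Metric.mem_ball, dist_pi_lt_iff hδ]
    intro v
    have hxS1 : S x ≤ 1 := hS1 x hx σ
    rw [Real.dist_eq, abs_lt]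
    by_cases hv : v ∈ σ
    · have h1 := abs_lt.1 (hxC.2 v hv)
      have h2 := hxC.1
      have h3 : p v ≤ 1 := by
        have := hS1 p hp {v}
        simpa using this
      have h4 := hσpos v hv
      constructor <;> nlinarith
    · have h1 : x v + S x ≤ 1 := by
        have := hS1 x hx (insert v σ)
        rwa [Finset.sum_insert hv] at this
      have h2 := hxC.1
      have h3 := hx.1 v
      rw [hσz v hv]
      constructor <;> linarith

lemma isCompact_real (F : Set (Finset V)) : IsCompact (real F) := by
  have : real F = ⋃ s ∈ F, (stdSimplex ℝ V ∩ ⋂ v : V, {x | v ∉ s → x v = 0}) := by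
    ext x
    simp only [real, stdSimplex, mem_ofPred_eq, mem_iUnion, mem_inter_iff, mem_iInter, exists_prop]
    constructor
    · rintro ⟨h1, h2, s, hs, h⟩; exact ⟨s, hs, ⟨h1, h2⟩, h⟩
    · rintro ⟨s, hs, ⟨h1, h2⟩, h⟩; exact ⟨h1, h2, s, hs, h⟩
  rw [this]
  refine (Set.toFinite F).isCompact_biUnion fun s _ => ?_
  refine (isCompact_stdSimplex ℝ V).inter_right (isClosed_iInter fun v => ?_)
  by_cases hv : v ∈ s
  · simp [hv]
  · simp only [hv, not_false_eq_true, true_imp_iff]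
    exact isClosed_eq (continuous_apply v) continuous_const


omit [Fintype V] [DecidableEq V] in
/-- Realizations are homeomorphic to abstract ones. -/
lemma exists_abstract {n : ℕ} (P : Geometry.SimplicialComplex ℝ (Fin n → ℝ))
    (hfin : P.faces.Finite) :
    ∃ (V : Type) (_ : Fintype V) (_ : DecidableEq V) (F : Set (Finset V)),
      (∀ s ∈ F, ∀ t ⊆ s, t.Nonempty → t ∈ F) ∧ Nonempty (real F ≃ₜ P.space) := by
  classical
  let T : Finset (Fin n → ℝ) := hfin.toFinset.biUnion id
  have hT : ∀ s ∈ P.faces, s ⊆ T := fun s hs =>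
    Finset.subset_biUnion_of_mem id (hfin.mem_toFinset.2 hs)
  let j : T ↪ (Fin n → ℝ) := Function.Embedding.subtype _
  let F : Set (Finset T) := {s | s.map j ∈ P.faces}
  let ext : (T → ℝ) → (Fin n → ℝ) → ℝ := fun x e => if h : e ∈ T then x ⟨e, h⟩ else 0
  have hext : ∀ (x : T → ℝ) (v : T), ext x v = x v := fun x v => by simp [ext]
  let φ : (T → ℝ) → (Fin n → ℝ) := fun x => ∑ v, x v • (v : Fin n → ℝ)
  have hφ : Continuous φ := by fun_prop
  -- description of points
  have hK : ∀ x ∈ real F, ∃ s ∈ P.faces, (∀ e, e ∉ s → ext x e = 0) ∧ (∀ e, 0 ≤ ext x e) ∧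
      ∑ e ∈ s, ext x e = 1 ∧ ∑ e ∈ s, ext x e • e = φ x := by
    rintro x ⟨h0, h1, s, hs, h⟩
    have hz : ∀ e, e ∉ s.map j → ext x e = 0 := by
      intro e he
      by_cases heT : e ∈ T
      · have := h ⟨e, heT⟩ fun h' => he (Finset.mem_map.2 ⟨_, h', rfl⟩)
        simpa [ext, heT] using this
      · simp [ext, heT]
    refine ⟨s.map j, hs, hz, ?_, ?_, ?_⟩
    · intro e
      simp only [ext]
      split_ifs
      · exact h0 _
      · exact le_rfl
    · rw [← h1, Finset.sum_subset (hT _ hs) fun e _ he => hz e he, ← Finset.sum_coe_sort]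
      exact Finset.sum_congr rfl fun v _ => hext x v
    · rw [Finset.sum_subset (hT _ hs) fun e _ he => by rw [hz e he, zero_smul],
        ← Finset.sum_coe_sort]
      exact Finset.sum_congr rfl fun v _ => by rw [hext x v]
  have hmaps : ∀ x ∈ real F, φ x ∈ P.space := by
    intro x hx
    obtain ⟨s, hs, -, h0, h1, h2⟩ := hK x hx
    exact Geometry.SimplicialComplex.mem_space_iff.2
      ⟨s, hs, Finset.mem_convexHull'.2 ⟨ext x, fun e _ => h0 e, h1, h2⟩⟩
  have hinj : ∀ x ∈ real F, ∀ y ∈ real F, φ x = φ y → x = y := by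
    intro x hx y hy hxy
    obtain ⟨s, hs, hsz, h0, h1, h2⟩ := hK x hx
    obtain ⟨t, ht, htz, k0, k1, k2⟩ := hK y hy
    have hmem : φ x ∈ convexHull ℝ ((s ∩ t : Finset (Fin n → ℝ)) : Set (Fin n → ℝ)) := by
      rw [Finset.coe_inter]
      refine P.inter_subset_convexHull hs ht ⟨?_, ?_⟩
      · exact Finset.mem_convexHull'.2 ⟨ext x, fun e _ => h0 e, h1, h2⟩
      · rw [hxy]; exact Finset.mem_convexHull'.2 ⟨ext y, fun e _ => k0 e, k1, k2⟩
    obtain ⟨z, -, z1, z2⟩ := Finset.mem_convexHull'.1 hmem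
    let Z : (Fin n → ℝ) → ℝ := fun e => if e ∈ s ∩ t then z e else 0
    have gen : ∀ (u : Finset (Fin n → ℝ)) (w : (Fin n → ℝ) → ℝ), u ∈ P.faces → s ∩ t ⊆ u →
        (∀ e, e ∉ u → w e = 0) → ∑ e ∈ u, w e = 1 → ∑ e ∈ u, w e • e = φ x → ∀ e, w e = Z e := by
      intro u w hu hsub hw w1 w2 e
      by_cases he : e ∈ u
      · refine (P.indep hu).eq_of_sum_eq_sum_subtype ?_ ?_ e he
        · rw [w1, ← z1, ← Finset.sum_subset hsub fun e _ he => by simp only [Z, he, if_false]]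
          exact Finset.sum_congr rfl fun e he => by simp only [Z, he, if_true]
        · rw [w2, ← z2, ← Finset.sum_subset hsub fun e _ he => by
            simp only [Z, he, if_false, zero_smul]]
          exact Finset.sum_congr rfl fun e he => by simp only [Z, he, if_true]
      · rw [hw e he]
        have : e ∉ s ∩ t := fun h => he (hsub h)
        simp only [Z, this, if_false]
    funext v
    rw [← hext x v, ← hext y v,
      gen s (ext x) hs Finset.inter_subset_left hsz h1 h2,
      gen t (ext y) ht Finset.inter_subset_right htz k1 (k2.trans hxy.symm)]
  have hsurj : ∀ q ∈ P.space, ∃ x ∈ real F, φ x = q := by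
    intro q hq
    obtain ⟨s, hs, hq⟩ := Geometry.SimplicialComplex.mem_space_iff.1 hq
    obtain ⟨w, w0, w1, w2⟩ := Finset.mem_convexHull'.1 hq
    refine ⟨fun v => if v.1 ∈ s then w v else 0, ⟨fun v => ?_, ?_, ?_⟩, ?_⟩
    · dsimp only
      split_ifs with h
      · exact w0 _ h
      · exact le_rfl
    · rw [← w1, Finset.sum_coe_sort T (fun v => if v ∈ s then w v else 0), Finset.sum_ite_mem,
        Finset.inter_eq_right.2 (hT s hs)]
    · refine ⟨Finset.univ.filter fun v : T => v.1 ∈ s, ?_, fun v hv => ?_⟩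
      · have : (Finset.univ.filter fun v : T => v.1 ∈ s).map j = s := by
          ext e
          simp only [Finset.mem_map, Finset.mem_filter, Finset.mem_univ, true_and]
          constructor
          · rintro ⟨v, hv, rfl⟩; exact hv
          · exact fun he => ⟨⟨e, hT s hs he⟩, he, rfl⟩
        change _ ∈ P.faces
        rw [this]; exact hs
      · have : v.1 ∉ s := fun h => hv (Finset.mem_filter.2 ⟨Finset.mem_univ _, h⟩)
        simp [this]
    · simp only [φ, ite_smul, zero_smul]
      rw [← w2, Finset.sum_coe_sort T (fun v => if v ∈ s then w v • v else 0), Finset.sum_ite_mem,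
        Finset.inter_eq_right.2 (hT s hs)]
  refine ⟨T, inferInstance, inferInstance, F, ?_, ?_⟩
  · intro s hs t hts htne
    exact P.down_closed hs (Finset.map_subset_map.2 hts) (htne.map)
  · haveI : CompactSpace (real F) := isCompact_iff_compactSpace.1 (isCompact_real F)
    let f : real F → P.space := fun x => ⟨φ x.1, hmaps x.1 x.2⟩
    have hf : Continuous f := (hφ.comp continuous_subtype_val).subtype_mk _
    have hb : Function.Bijective f := by
      constructor
      · intro x y h
        exact Subtype.ext (hinj x.1 x.2 y.1 y.2 (congrArg Subtype.val h))
      · rintro ⟨q, hq⟩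
        obtain ⟨x, hx, h⟩ := hsurj q hq
        exact ⟨⟨x, hx⟩, Subtype.ext h⟩
    exact ⟨hf.homeoOfEquivCompactToT2 (f := Equiv.ofBijective f hb)⟩

lemma good_sInter {Y : Type} {F : Set (Finset V)} {f : Y → (V → ℝ)} (hf : Function.Injective f)
    (t : Finset (Set Y)) (ht : t.Nonempty) (h : ∀ U ∈ t, Good F (f '' U)) :
    Good F (f '' ⋂₀ (↑t : Set (Set Y))) := by
  classical
  induction ht using Finset.Nonempty.cons_induction with
  | singleton a => simpa using h
  | cons a s ha hs ih =>
    rw [Finset.coe_cons, sInter_insert, image_inter hf]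
    exact (h a (Finset.mem_cons_self a s)).inter
      (ih fun U hU => h U (Finset.mem_cons_of_mem hU))

end GoodCoverAux

open GoodCoverAux Topology

/-- Let `Y` be a triangulable space (a compact topological space homeomorphic to
the geometric realization of a finite simplicial complex in some `ℝⁿ`) and let `O ⊆ Y` be open.
Then every open cover `𝒱` of `O` has a refinement `𝒰` which is an open cover of `O`, is
locally finite in `O`, and is a good cover of `O` (every nonempty intersection of finitely
many members of `𝒰` is contractible). -/
theorem good_cover_refinement
    {Y : Type} [TopologicalSpace Y] [CompactSpace Y]
    (htri : ∃ (n : ℕ) (P : Geometry.SimplicialComplex ℝ (Fin n → ℝ)),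
      P.faces.Finite ∧ Nonempty (Y ≃ₜ ↥P.space))
    (O : Set Y) (hO : IsOpen O)
    (𝒱 : Set (Set Y)) (h𝒱open : ∀ V ∈ 𝒱, IsOpen V ∧ V ⊆ O) (h𝒱cov : O ⊆ ⋃₀ 𝒱) :
    ∃ 𝒰 : Set (Set Y),
      (∀ U ∈ 𝒰, IsOpen U ∧ U ⊆ O) ∧
      O ⊆ ⋃₀ 𝒰 ∧
      (∀ U ∈ 𝒰, ∃ V ∈ 𝒱, U ⊆ V) ∧
      (∀ y ∈ O, ∃ W, IsOpen W ∧ y ∈ W ∧ {U ∈ 𝒰 | (U ∩ W).Nonempty}.Finite) ∧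
      (∀ t : Finset (Set Y), ↑t ⊆ 𝒰 → t.Nonempty → (⋂₀ (↑t : Set (Set Y))).Nonempty →
        ContractibleSpace ↥(⋂₀ (↑t : Set (Set Y)))) := by
  obtain ⟨n, P, hfin, ⟨e0⟩⟩ := htri
  obtain ⟨V, _, _, F, hF, ⟨e1⟩⟩ := exists_abstract P hfin
  let e : Y ≃ₜ real F := e0.trans e1.symm
  let f : Y → (V → ℝ) := fun y => (e y).1
  have hf : IsEmbedding f := IsEmbedding.subtypeVal.comp e.isEmbedding
  have hfr : ∀ y, f y ∈ real F := fun y => (e y).2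
  have hfs : ∀ x ∈ real F, ∃ y, f y = x := fun x hx => ⟨e.symm ⟨x, hx⟩, by simp [f]⟩
  haveI : T2Space Y := hf.t2Space
  haveI : SecondCountableTopology Y := hf.secondCountableTopology
  haveI : LocallyCompactSpace O := hO.locallyCompactSpace
  have hB : ∀ x : O, (𝓝 x).HasBasis
      (fun U : Set O => (x ∈ U ∧ IsOpen U) ∧ Good F (f '' (Subtype.val '' U)) ∧
        ∃ A ∈ 𝒱, Subtype.val '' U ⊆ A) id := by
    intro x
    refine ⟨fun N => ⟨fun hN => ?_, fun ⟨U, hU, hUN⟩ =>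
      Filter.mem_of_superset (hU.1.2.mem_nhds hU.1.1) hUN⟩⟩
    obtain ⟨A, hA, hxA⟩ := h𝒱cov x.2
    have hN' : Subtype.val '' N ∩ A ∈ 𝓝 x.1 :=
      Filter.inter_mem (hO.isOpenEmbedding_subtypeVal.image_mem_nhds.2 hN)
        ((h𝒱open A hA).1.mem_nhds hxA)
    rw [hf.isInducing.nhds_eq_comap, Filter.mem_comap] at hN'
    obtain ⟨M, hM, hMN⟩ := hN'
    obtain ⟨δ, hδ, hball⟩ := Metric.mem_nhds_iff.1 hM
    obtain ⟨C, hCo, hxC, hCg, hCb⟩ := good_basis (hfr x.1) hδ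
    have hsub : f ⁻¹' C ⊆ Subtype.val '' N ∩ A := fun y hy =>
      hMN (hball (hCb ⟨hfr y, hy⟩))
    have himg : Subtype.val '' (Subtype.val ⁻¹' (f ⁻¹' C) : Set O) = f ⁻¹' C := by
      rw [Subtype.image_preimage_coe, inter_eq_right]
      exact fun y hy => (h𝒱open A hA).2 (hsub hy).2
    have hop : IsOpen (f ⁻¹' C) := hCo.preimage hf.continuous
    refine ⟨Subtype.val ⁻¹' (f ⁻¹' C), ⟨⟨hxC, hop.preimage continuous_subtype_val⟩, ?_, A, hA, ?_⟩,
      ?_⟩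
    · rw [himg]
      have : f '' (f ⁻¹' C) = real F ∩ C := by
        ext z
        constructor
        · rintro ⟨y, hy, rfl⟩; exact ⟨hfr y, hy⟩
        · rintro ⟨hz, hzC⟩
          obtain ⟨y, rfl⟩ := hfs z hz
          exact ⟨y, hzC, rfl⟩
      rw [this]; exact hCg
    · rw [himg]; exact fun y hy => (hsub hy).2
    · intro y hy
      obtain ⟨y', hy', h⟩ := (hsub hy).1
      rwa [← Subtype.ext h]
  obtain ⟨α, c, r, hr, hcov, hlf⟩ := refinement_of_locallyCompact_sigmaCompact_of_nhds_basis hB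
  simp only [id] at hcov hlf
  refine ⟨range fun a => Subtype.val '' (r a), ?_, ?_, ?_, ?_, ?_⟩
  · rintro _ ⟨a, rfl⟩
    exact ⟨hO.isOpenMap_subtype_val _ (hr a).1.2, Subtype.coe_image_subset _ _⟩
  · intro y hy
    obtain ⟨a, ha⟩ := mem_iUnion.1 (hcov ▸ mem_univ (⟨y, hy⟩ : O) : (⟨y, hy⟩ : O) ∈ ⋃ a, r a)
    exact ⟨_, ⟨a, rfl⟩, ⟨y, hy⟩, ha, rfl⟩
  · rintro _ ⟨a, rfl⟩
    exact (hr a).2.2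
  · intro y hy
    obtain ⟨N, hN, hNf⟩ := hlf ⟨y, hy⟩
    obtain ⟨W, hWN, hWo, hyW⟩ := mem_nhds_iff.1 hN
    refine ⟨Subtype.val '' W, hO.isOpenMap_subtype_val _ hWo, ⟨_, hyW, rfl⟩, ?_⟩
    refine (hNf.image fun a => Subtype.val '' (r a)).subset ?_
    rintro _ ⟨⟨a, rfl⟩, z, ⟨u, hu, rfl⟩, ⟨w, hw, hwu⟩⟩
    rw [Subtype.ext hwu] at hw
    exact ⟨a, ⟨u, hu, hWN hw⟩, rfl⟩
  · intro t ht htne hne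
    have hg : Good F (f '' ⋂₀ (↑t : Set (Set Y))) := by
      refine good_sInter hf.injective t htne fun U hU => ?_
      obtain ⟨a, rfl⟩ := ht hU
      exact (hr a).2.1
    haveI := hg.contractible hF (hne.image f)
    exact (hf.homeomorphImage _).contractibleSpace
end

section
/- Let Y be a topological space and 𝒰 a locally finite good open cover of Y. Let P be a finite simplicial complex in ℝⁿ and let f, g : |P| → Y be continuous maps which are 𝒰-close. Then f and g are homotopic. -/
open Set Geometry

lemma cmh_contraction {Y : Type*} [TopologicalSpace Y] (C : Set Y) (hC : ContractibleSpace ↥C) :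
    ∃ (K : Y → unitInterval → Y) (c : Y), c ∈ C ∧ (∀ y, K y 0 = y) ∧ (∀ y ∈ C, K y 1 = c) ∧
      (∀ y ∈ C, ∀ t, K y t ∈ C) ∧
      ContinuousOn (fun p : Y × unitInterval => K p.1 p.2) (C ×ˢ univ) := by
  classical
  obtain ⟨c, ⟨H⟩⟩ := (contractible_iff_id_nullhomotopic ↥C).1 hC
  refine ⟨fun y t => if h : y ∈ C then (H (t, ⟨y, h⟩) : Y) else y, c, c.2, ?_, ?_, ?_, ?_⟩
  · intro y
    by_cases h : y ∈ C <;> simp [h]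
  · intro y h
    simp [h]
  · intro y h t
    simp [h]
  · rw [continuousOn_iff_continuous_restrict]
    have : Continuous (fun p : ↥(C ×ˢ (univ : Set unitInterval)) =>
        ((H (p.1.2, ⟨p.1.1, p.2.1⟩) : ↥C) : Y)) := by fun_prop
    convert! this using 2 with p
    have h : p.1.1 ∈ C := p.2.1
    simp [Set.restrict, h]

lemma cmh_step {Z Y ι : Type*} [TopologicalSpace Z] [NormalSpace Z] [TopologicalSpace Y]
    [Finite ι] (A : ι → Set Z) (hA : ∀ i, IsClosed (A i)) (U : ι → Set Y)
    (hU : ∀ i, IsOpen (U i)) (S : Finset ι)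
    (hC : ContractibleSpace ↥(⋂ i ∈ S, U i))
    (B : Set Z) (hB : IsClosed B) (hSB : ∀ i ∉ S, A i ∩ (⋂ i ∈ S, A i) ⊆ B)
    (N : Set Z) (hN : IsOpen N) (hBN : B ⊆ N) (φ : Z → Y) (hφ : ContinuousOn φ N)
    (hφU : ∀ i, ∀ x ∈ N, x ∈ A i → φ x ∈ U i) :
    ∃ (N' : Set Z) (φ' : Z → Y), IsOpen N' ∧ B ∪ (⋂ i ∈ S, A i) ⊆ N' ∧ ContinuousOn φ' N' ∧
      (∀ i, ∀ x ∈ N', x ∈ A i → φ' x ∈ U i) ∧ ∀ x ∈ B, φ' x = φ x := by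
  classical
  set C := ⋂ i ∈ S, U i with hCdef
  have hCo : IsOpen C := S.finite_toSet.isOpen_biInter (fun i _ => hU i)
  obtain ⟨K, c, hc, hK0, hK1, hKC, hKcont⟩ := cmh_contraction C hC
  obtain ⟨M, hM, hBM, hMN⟩ := normal_exists_closure_subset hB hN hBN
  obtain ⟨N1, hN1, hMN1, hN1N⟩ := normal_exists_closure_subset isClosed_closure hN hMN
  obtain ⟨v, hv0, hv1, hv⟩ := exists_continuous_zero_one_of_isClosed
    (isClosed_closure (s := M)) hN1.isClosed_compl
    (Set.disjoint_left.2 fun x hx hx' => hx' (hMN1 hx))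
  let u : Z → unitInterval := fun x => ⟨v x, hv x⟩
  have hu : Continuous u := by
    apply Continuous.subtype_mk v.continuous
  have hu0 : ∀ x ∈ M, u x = 0 := fun x hx => Subtype.ext (hv0 (subset_closure hx))
  have hu1 : ∀ x, x ∉ N1 → u x = 1 := fun x hx => Subtype.ext (hv1 hx)
  have hNC : IsOpen (N ∩ φ ⁻¹' C) := hφ.isOpen_inter_preimage hN hCo
  let V : Set Z := (closure N1 \ (N ∩ φ ⁻¹' C))ᶜ ∩ ⋂ i ∈ {i | i ∉ S}, (A i \ M)ᶜ
  have hV : IsOpen V := by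
    apply IsOpen.inter
    · exact (isClosed_closure.sdiff hNC).isOpen_compl
    · exact (Set.toFinite _).isOpen_biInter fun i _ => ((hA i).sdiff hM).isOpen_compl
  let φ' : Z → Y := fun x => if x ∈ closure N1 then K (φ x) (u x) else c
  have hφM : ∀ x ∈ M, φ' x = φ x := by
    intro x hx
    have : x ∈ closure N1 := subset_closure (hMN1 (subset_closure hx))
    simp [φ', this, hu0 x hx, hK0]
  have hMsub : M ⊆ N := subset_closure.trans hMN
  have hV1 : ∀ x ∈ V, x ∈ closure N1 → x ∈ N ∩ φ ⁻¹' C := by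
    intro x hx h
    by_contra h'
    exact hx.1 ⟨h, h'⟩
  have hW : ∀ x ∈ N ∩ φ ⁻¹' C, φ' x = K (φ x) (u x) := by
    intro x hx
    by_cases h : x ∈ closure N1
    · simp [φ', h]
    · have : u x = 1 := hu1 x fun h' => h (subset_closure h')
      simp [φ', h, this, hK1 _ hx.2]
  have hφ'C : ∀ x ∈ V, φ' x ∈ C := by
    intro x hx
    by_cases h : x ∈ closure N1
    · rw [hW x (hV1 x hx h)]
      exact hKC _ (hV1 x hx h).2 _
    · simpa [φ', h] using hc
  refine ⟨M ∪ V, φ', hM.union hV, ?_, ?_, ?_, fun x hx => hφM x (hBM hx)⟩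
  · rintro x (hx | hx)
    · exact Or.inl (hBM hx)
    · right
      have hx' : ∀ i ∈ S, x ∈ A i := by simpa using hx
      refine ⟨?_, ?_⟩
      · rintro ⟨h1, h2⟩
        refine h2 ⟨hN1N h1, ?_⟩
        simp only [hCdef, mem_preimage, mem_iInter]
        exact fun i hi => hφU i x (hN1N h1) (hx' i hi)
      · simp only [mem_iInter]
        rintro i hi ⟨h1, h2⟩
        exact h2 (hBM (hSB i hi ⟨h1, hx⟩))
  · intro x hx
    apply ContinuousAt.continuousWithinAt
    rcases hx with hx | hx
    · refine (hφ.continuousAt (hN.mem_nhds (hMsub hx))).congr ?_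
      filter_upwards [hM.mem_nhds hx] with y hy using (hφM y hy).symm
    · by_cases h : x ∈ closure N1
      · have hxW := hV1 x hx h
        have h1 : ContinuousAt (fun y => K (φ y) (u y)) x := by
          have h2 : ContinuousAt (fun p : Y × unitInterval => K p.1 p.2) (φ x, u x) :=
            hKcont.continuousAt ((hCo.prod isOpen_univ).mem_nhds ⟨hxW.2, mem_univ _⟩)
          have h3 : ContinuousAt (fun y => (φ y, u y)) x :=
            (hφ.continuousAt (hN.mem_nhds hxW.1)).prodMk hu.continuousAt
          exact ContinuousAt.comp (f := fun y => (φ y, u y)) h2 h3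
        refine h1.congr ?_
        filter_upwards [hNC.mem_nhds hxW] with y hy using (hW y hy).symm
      · refine (continuousAt_const (y := c)).congr ?_
        filter_upwards [isClosed_closure.isOpen_compl.mem_nhds h] with y hy
        have : y ∉ closure N1 := hy
        simp [φ', this]
  · intro i x hx hxi
    by_cases hxM : x ∈ M
    · rw [hφM x hxM]
      exact hφU i x (hMsub hxM) hxi
    · have hxV : x ∈ V := hx.resolve_left hxM
      by_cases hi : i ∈ S
      · have := hφ'C x hxV
        simp only [hCdef, mem_iInter] at this
        exact this i hi
      · have := hxV.2
        simp only [mem_iInter] at this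
        exact absurd ⟨hxi, hxM⟩ (this i hi)

lemma cmh_induct {Z Y ι : Type*} [TopologicalSpace Z] [NormalSpace Z] [TopologicalSpace Y]
    [Finite ι] (A : ι → Set Z) (hA : ∀ i, IsClosed (A i)) (U : ι → Set Y)
    (hU : ∀ i, IsOpen (U i))
    (hC : ∀ S : Finset ι, S.Nonempty → (⋂ i ∈ S, A i).Nonempty →
      ContractibleSpace ↥(⋂ i ∈ S, U i))
    (B : Set Z) (hB : IsClosed B)
    (N : Set Z) (hN : IsOpen N) (hBN : B ⊆ N) (φ : Z → Y) (hφ : ContinuousOn φ N)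
    (hφU : ∀ i, ∀ x ∈ N, x ∈ A i → φ x ∈ U i) (m : ℕ) :
    ∀ 𝒯 : Finset (Finset ι), 𝒯.card = m → (∀ S ∈ 𝒯, S.Nonempty) →
      (∀ S ∈ 𝒯, ∀ T, S ⊆ T → T ∈ 𝒯) →
    ∃ (N' : Set Z) (φ' : Z → Y), IsOpen N' ∧ B ∪ (⋃ S ∈ 𝒯, ⋂ i ∈ S, A i) ⊆ N' ∧
      ContinuousOn φ' N' ∧
      (∀ i, ∀ x ∈ N', x ∈ A i → φ' x ∈ U i) ∧ ∀ x ∈ B, φ' x = φ x := by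
  classical
  induction m with
  | zero =>
    intro 𝒯 h0 _ _
    have : 𝒯 = ∅ := Finset.card_eq_zero.1 h0
    subst this
    exact ⟨N, φ, hN, by simpa using hBN, hφ, hφU, fun _ _ => rfl⟩
  | succ m ih =>
    intro 𝒯 hm hne hup
    obtain ⟨S, hS⟩ := 𝒯.exists_minimal (Finset.card_pos.1 (by omega))
    have hS𝒯 : S ∈ 𝒯 := hS.1
    obtain ⟨N1, φ1, hN1, hsub, hφ1, hφU1, heq⟩ := ih (𝒯.erase S)
      (by rw [Finset.card_erase_of_mem hS𝒯]; omega)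
      (fun T hT => hne T (Finset.mem_of_mem_erase hT))
      (by
        intro T hT T' hTT'
        have hT1 := Finset.mem_of_mem_erase hT
        refine Finset.mem_erase.2 ⟨?_, hup T hT1 T' hTT'⟩
        rintro rfl
        exact (Finset.ne_of_mem_erase hT) (le_antisymm hTT' (hS.2 hT1 hTT')))
    have hunion : (⋃ T ∈ 𝒯, ⋂ i ∈ T, A i) =
        (⋃ T ∈ 𝒯.erase S, ⋂ i ∈ T, A i) ∪ ⋂ i ∈ S, A i := by
      conv_lhs => rw [← Finset.insert_erase hS𝒯]
      rw [Finset.set_biUnion_insert, union_comm]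
    rw [hunion, ← union_assoc]
    by_cases hAS : (⋂ i ∈ S, A i).Nonempty
    · obtain ⟨N2, φ2, hN2, hsub2, hφ2, hφU2, heq2⟩ := cmh_step A hA U hU S
        (hC S (hne S hS𝒯) hAS) (B ∪ (⋃ T ∈ 𝒯.erase S, ⋂ i ∈ T, A i))
        (hB.union ((𝒯.erase S).finite_toSet.isClosed_biUnion fun T _ =>
          isClosed_biInter fun i _ => hA i))
        (by
          intro i hi x hx
          right
          have hT : insert i S ∈ 𝒯.erase S := Finset.mem_erase.2
            ⟨fun h => hi (h ▸ Finset.mem_insert_self i S),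
              hup S hS𝒯 _ (Finset.subset_insert i S)⟩
          refine mem_biUnion hT ?_
          rw [Finset.set_biInter_insert]
          exact hx)
        N1 hN1 hsub φ1 hφ1 hφU1
      exact ⟨N2, φ2, hN2, hsub2, hφ2, hφU2, fun x hx => (heq2 x (Or.inl hx)).trans (heq x hx)⟩
    · rw [not_nonempty_iff_eq_empty.1 hAS, union_empty]
      exact ⟨N1, φ1, hN1, hsub, hφ1, hφU1, heq⟩

lemma cmh_main {X Y ι : Type*} [TopologicalSpace X] [CompactSpace X] [T2Space X]
    [TopologicalSpace Y] [Finite ι] (U : ι → Set Y) (hU : ∀ i, IsOpen (U i))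
    (hC : ∀ S : Finset ι, S.Nonempty → (⋂ i ∈ S, U i).Nonempty →
      ContractibleSpace ↥(⋂ i ∈ S, U i))
    (f g : C(X, Y)) (hclose : ∀ x, ∃ i, f x ∈ U i ∧ g x ∈ U i) :
    ContinuousMap.Homotopic f g := by
  classical
  have := Fintype.ofFinite ι
  obtain ⟨A, hAcov, hAcl, hAsub⟩ := exists_iUnion_eq_closed_subset
    (u := fun i => f ⁻¹' U i ∩ g ⁻¹' U i)
    (fun i => ((hU i).preimage f.continuous).inter ((hU i).preimage g.continuous))
    (fun x => Set.toFinite _)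
    (by
      ext x
      simpa using hclose x)
  let h2 : unitInterval := ⟨1/2, by norm_num, by norm_num⟩
  let φ : unitInterval × X → Y := fun p => if p.1 < h2 then f p.2 else g p.2
  have h02 : (0 : unitInterval) < h2 := Subtype.coe_lt_coe.1 (by simp [h2])
  have h21 : h2 < (1 : unitInterval) := Subtype.coe_lt_coe.1 (by simp [h2]; norm_num)
  obtain ⟨N, ψ, hN, hsub, hψ, hψU, heq⟩ := cmh_induct
    (Z := unitInterval × X) (fun i => Prod.snd ⁻¹' A i)
    (fun i => (hAcl i).preimage continuous_snd) U hU
    (by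
      intro S hS ⟨p, hp⟩
      refine hC S hS ⟨f p.2, ?_⟩
      simp only [mem_iInter] at hp ⊢
      exact fun i hi => (hAsub i (hp i hi)).1)
    ({p | p.1 = 0} ∪ {p | p.1 = 1})
    ((isClosed_eq continuous_fst continuous_const).union
      (isClosed_eq continuous_fst continuous_const))
    ({p | p.1 < h2} ∪ {p | h2 < p.1})
    ((isOpen_lt continuous_fst continuous_const).union
      (isOpen_lt continuous_const continuous_fst))
    (by
      rintro p (hp | hp)
      · left
        simp only [mem_setOf_eq] at hp ⊢
        rw [hp]; exact h02
      · right
        simp only [mem_setOf_eq] at hp ⊢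
        rw [hp]; exact h21)
    φ
    (by
      intro p hp
      apply ContinuousAt.continuousWithinAt
      rcases hp with hp | hp
      · have : ContinuousAt (fun q : unitInterval × X => f q.2) p := by fun_prop
        refine this.congr ?_
        filter_upwards [(isOpen_lt continuous_fst continuous_const).mem_nhds hp] with q hq
        have : q.1 < h2 := hq
        simp [φ, this]
      · have : ContinuousAt (fun q : unitInterval × X => g q.2) p := by fun_prop
        refine this.congr ?_
        filter_upwards [(isOpen_lt continuous_const continuous_fst).mem_nhds hp] with q hq
        have : ¬ q.1 < h2 := not_lt.2 (le_of_lt hq)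
        simp [φ, this])
    (by
      intro i p _ hp
      by_cases h : p.1 < h2
      · simpa [φ, h] using (hAsub i hp).1
      · simpa [φ, h] using (hAsub i hp).2)
    _ (Finset.univ.filter fun S : Finset ι => S.Nonempty) rfl
    (by simp)
    (by
      intro S hS T hST
      simp only [Finset.mem_filter, Finset.mem_univ, true_and] at hS ⊢
      exact hS.mono hST)
  have hNuniv : N = univ := by
    refine eq_univ_of_forall fun p => hsub (Or.inr ?_)
    have hp : p.2 ∈ ⋃ i, A i := hAcov ▸ mem_univ _
    obtain ⟨i, hi⟩ := mem_iUnion.1 hp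
    refine mem_biUnion (x := {i}) (by simp) ?_
    simpa using hi
  rw [hNuniv, continuousOn_univ] at hψ
  refine ⟨⟨⟨ψ, hψ⟩, ?_, ?_⟩⟩
  · intro x
    have := heq (0, x) (Or.inl rfl)
    simpa [φ, h02] using this
  · intro x
    have := heq (1, x) (Or.inr rfl)
    simpa [φ, not_lt.2 h21.le] using this



/-- Let `Y` be a topological space and `𝒰` a locally finite good open cover
of `Y`. Let `P` be a finite simplicial complex in `ℝⁿ` and let `f, g : |P| → Y` be
continuous maps which are `𝒰`-close. Then `f` and `g` are homotopic. -/
theorem close_maps_homotopic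
    {n : ℕ} {Y : Type} [TopologicalSpace Y]
    (𝒰 : Set (Set Y)) (hopen : ∀ U ∈ 𝒰, IsOpen U) (hcov : ⋃₀ 𝒰 = Set.univ)
    (hlf : ∀ y : Y, ∃ W, IsOpen W ∧ y ∈ W ∧ {U ∈ 𝒰 | (U ∩ W).Nonempty}.Finite)
    (hgood : ∀ t : Finset (Set Y), ↑t ⊆ 𝒰 → t.Nonempty → (⋂₀ (↑t : Set (Set Y))).Nonempty →
      ContractibleSpace ↥(⋂₀ (↑t : Set (Set Y))))
    (P : Geometry.SimplicialComplex ℝ (Fin n → ℝ)) (hP : P.faces.Finite)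
    (f g : C(↥P.space, Y))
    (hclose : ∀ z : ↥P.space, ∃ U ∈ 𝒰, f z ∈ U ∧ g z ∈ U) :
    ContinuousMap.Homotopic f g := by
  classical
  have hcomp : IsCompact P.space := by
    unfold Geometry.SimplicialComplex.space
    exact hP.isCompact_biUnion fun s _ => s.finite_toSet.isCompact_convexHull ℝ
  have : CompactSpace ↥P.space := isCompact_iff_compactSpace.1 hcomp
  obtain ⟨t, ht⟩ := isCompact_univ.elim_finite_subcover
    (fun U : ↥𝒰 => f ⁻¹' U.1 ∩ g ⁻¹' U.1)
    (fun U => ((hopen _ U.2).preimage f.continuous).inter ((hopen _ U.2).preimage g.continuous))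
    (by
      intro z _
      obtain ⟨U, hU, h⟩ := hclose z
      exact mem_iUnion.2 ⟨⟨U, hU⟩, h⟩)
  refine cmh_main (ι := ↥t) (fun i => i.1.1) (fun i => hopen _ i.1.2) ?_ f g ?_
  · intro S hS hne
    have key : (⋂ i ∈ S, (i.1.1 : Set Y)) =
        ⋂₀ (↑(S.image fun i : ↥t => (i.1.1 : Set Y)) : Set (Set Y)) := by
      ext y
      simp
    rw [key] at hne ⊢
    refine hgood _ ?_ (hS.image _) hne
    intro V hV
    obtain ⟨i, _, rfl⟩ := Finset.mem_image.1 (Finset.mem_coe.1 hV)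
    exact i.1.2
  · intro z
    obtain ⟨U, hU, h⟩ := mem_iUnion₂.1 (ht (mem_univ z))
    exact ⟨⟨U, hU⟩, h⟩
end

section
/- Let 𝒰 be a locally finite good open cover of a topological space Y. Let P be a finite simplicial complex in ℝⁿ, let L be a subcomplex of P (a simplicial complex whose set of faces is contained in that of P), and set D = |L| ∪ P⁰, where P⁰ ⊆ ℝⁿ is the set of vertices of P. Let f : D → Y be a continuous map which is (𝒰,P)-small, i.e., for every face s of P there is U ∈ 𝒰 with f(convexHull(s) ∩ D) ⊆ U. Then f extends to a continuous map f' : |P| → Y which is (𝒰,P)-small and which moreover satisfies: for every U ∈ 𝒰 and every face s of P, if f(convexHull(s) ∩ D) ⊆ U then f'(convexHull(s)) ⊆ U. -/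
open Set Geometry

/-- A map `f` defined on a subset `D` of `ℝⁿ` is `(𝒰,P)`-small if for every face `s` of `P`
the image of `convexHull ℝ s ∩ D` under `f` is contained in some member of `𝒰`. -/
def IsSmallMap {n : ℕ} {Y : Type} (𝒰 : Set (Set Y))
    (P : Geometry.SimplicialComplex ℝ (Fin n → ℝ)) (D : Set (Fin n → ℝ))
    (f : ↥D → Y) : Prop :=
  ∀ s ∈ P.faces, ∃ U ∈ 𝒰,
    f '' (Subtype.val ⁻¹' convexHull ℝ (s : Set (Fin n → ℝ))) ⊆ U

lemma cone_ext {E Y : Type} [NormedAddCommGroup E] [NormedSpace ℝ E] [TopologicalSpace Y]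
    (s : Finset E) (hs : AffineIndependent ℝ ((↑) : s → E)) (hs2 : 1 < s.card)
    (V : Set Y) [hV : ContractibleSpace V] (g : E → Y)
    (hg : ContinuousOn g (⋃ i ∈ s, convexHull ℝ ((s : Set E) \ {i})))
    (hgV : ∀ i ∈ s, MapsTo g (convexHull ℝ ((s : Set E) \ {i})) V) :
    ∃ h : E → Y, ContinuousOn h (convexHull ℝ (s : Set E)) ∧
      MapsTo h (convexHull ℝ (s : Set E)) V ∧
      ∀ i ∈ s, EqOn h g (convexHull ℝ ((s : Set E) \ {i})) := by
  classical
  -- boundary of the standard simplex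
  let B : Set (s → ℝ) := {w | w ∈ stdSimplex ℝ s ∧ ∃ i, w i = 0}
  have hBc : IsCompact B := by
    refine (isCompact_stdSimplex ℝ s).of_isClosed_subset ?_ (fun w hw => hw.1)
    have : B = stdSimplex ℝ s ∩ ⋃ i, {w | w i = 0} := by
      ext w; simp [B]
    rw [this]
    refine (isClosed_stdSimplex ℝ s).inter (isClosed_iUnion_of_finite fun i => ?_)
    exact isClosed_eq (continuous_apply i) continuous_const
  have : CompactSpace B := isCompact_iff_compactSpace.1 hBc
  let A : (s → ℝ) → E := fun w => ∑ i, w i • (i : E)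
  have hAc : Continuous A := by
    unfold A; fun_prop
  have hA : ∀ w ∈ stdSimplex ℝ s, A w ∈ convexHull ℝ (s : Set E) := by
    intro w hw
    exact (convex_convexHull ℝ _).sum_mem (fun i _ => hw.1 i) hw.2
      (fun i _ => subset_convexHull ℝ _ i.2)
  have hAinj : ∀ w w' : s → ℝ, ∑ i, w i = 1 → ∑ i, w' i = 1 → A w = A w' → w = w' := by
    intro w w' h1 h2 h
    have := (affineIndependent_iff.1 hs) Finset.univ (w - w')
      (by simp only [Pi.sub_apply, Finset.sum_sub_distrib, h1, h2, sub_self])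
      (by simp only [Pi.sub_apply, sub_smul, Finset.sum_sub_distrib]; exact sub_eq_zero.2 h)
    ext i
    have := this i (Finset.mem_univ _)
    simpa [sub_eq_zero] using this
  have hAsurj : ∀ x ∈ convexHull ℝ (s : Set E), ∃ w ∈ stdSimplex ℝ s, A w = x := by
    intro x hx
    obtain ⟨w, h0, h1, h2⟩ := Finset.mem_convexHull'.1 hx
    refine ⟨fun i => w i, ⟨fun i => h0 i i.2, ?_⟩, ?_⟩
    · rw [← h1]; exact Finset.sum_coe_sort s w
    · rw [← h2]; exact Finset.sum_coe_sort s (fun y => w y • y)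
  have hAB : ∀ w ∈ B, ∃ i ∈ s, A w ∈ convexHull ℝ ((s : Set E) \ {i}) := by
    rintro w ⟨hw, i, hi⟩
    refine ⟨i, i.2, ?_⟩
    have : A w = ∑ j ∈ Finset.univ.erase i, w j • (j : E) := by
      unfold A
      rw [← Finset.add_sum_erase _ _ (Finset.mem_univ i)]; simp [hi]
    rw [this]
    refine (convex_convexHull ℝ _).sum_mem (fun i _ => hw.1 i) ?_ ?_
    · rw [← hw.2, ← Finset.add_sum_erase _ _ (Finset.mem_univ i)]; simp [hi]
    · intro j hj
      refine subset_convexHull ℝ _ ⟨j.2, ?_⟩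
      exact fun h => (Finset.mem_erase.1 hj).1 (Subtype.ext h)
  have hBA : ∀ i ∈ s, ∀ x ∈ convexHull ℝ ((s : Set E) \ {i}), ∃ w ∈ B, A w = x := by
    intro i hi x hx
    have hx' : x ∈ convexHull ℝ ((s.erase i : Finset E) : Set E) := by simpa using hx
    obtain ⟨w, h0, h1, h2⟩ := Finset.mem_convexHull'.1 hx'
    let w' : E → ℝ := fun y => if y = i then 0 else w y
    have e1 : ∀ y ∈ s.erase i, w' y = w y := by
      intro y hy; simp [w', (Finset.mem_erase.1 hy).1]
    have e0 : w' i = 0 := by simp [w']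
    refine ⟨fun j => w' j, ⟨⟨fun j => ?_, ?_⟩, ⟨i, hi⟩, e0⟩, ?_⟩
    · by_cases hj : (j : E) = i
      · simp [w', hj]
      · have : (j : E) ∈ s.erase i := Finset.mem_erase.2 ⟨hj, j.2⟩
        show 0 ≤ w' j
        rw [e1 _ this]; exact h0 _ this
    · rw [← h1]; refine (Finset.sum_coe_sort s w').trans ?_
      rw [← Finset.add_sum_erase _ _ hi, e0, zero_add]
      exact Finset.sum_congr rfl e1
    · rw [← h2]; refine (Finset.sum_coe_sort s (fun y => w' y • y)).trans ?_
      rw [← Finset.add_sum_erase _ _ hi, e0, zero_smul, zero_add]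
      exact Finset.sum_congr rfl fun y hy => by rw [e1 y hy]
  -- the cone parametrisation
  have hN : (0:ℝ) < s.card := by exact_mod_cast (by omega : 0 < s.card)
  let c : ℝ := (s.card : ℝ)⁻¹
  have hc : 0 < c := inv_pos.2 hN
  have hNc : s.card * c = 1 := mul_inv_cancel₀ hN.ne'
  let φ : (s → ℝ) → ℝ → (s → ℝ) := fun w t i => (1 - t) * c + t * w i
  have hφ1 : ∀ w t, ∑ i, w i = 1 → ∑ i, φ w t i = 1 := by
    intro w t hw
    simp only [φ, Finset.sum_add_distrib, ← Finset.mul_sum, hw]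
    simp
    linear_combination (1 - t) * hNc
  have hφ : ∀ w ∈ stdSimplex ℝ s, ∀ t : unitInterval, φ w t ∈ stdSimplex ℝ s := by
    intro w hw t
    refine ⟨fun i => ?_, hφ1 w t hw.2⟩
    have := hw.1 i
    have h1 := t.2.1
    have h2 : 0 ≤ 1 - (t:ℝ) := by linarith [t.2.2]
    simp only [φ]; positivity
  let Φ : C(B × unitInterval, convexHull ℝ (s : Set E)) :=
    ⟨fun p => ⟨A (φ p.1 p.2), hA _ (hφ _ p.1.2.1 _)⟩, by
      refine Continuous.subtype_mk (hAc.comp ?_) _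
      refine continuous_pi fun i => ?_
      have h1 : Continuous fun p : B × unitInterval => (p.2 : ℝ) := by fun_prop
      have h2 : Continuous fun p : B × unitInterval => (p.1 : s → ℝ) i :=
        (continuous_apply i).comp (continuous_subtype_val.comp continuous_fst)
      exact ((continuous_const.sub h1).mul continuous_const).add (h1.mul h2)⟩
  -- parameters recovered
  have key : ∀ (w w' : B) (t t' : unitInterval), φ w t = φ w' t' → (t':ℝ) ≤ t := by
    intro w w' t t' h
    obtain ⟨i, hi⟩ := w'.2.2
    have h1 := congrFun h i
    simp only [φ, hi] at h1
    have h2 : 0 ≤ (t:ℝ) * (w : s → ℝ) i := mul_nonneg t.2.1 (w.2.1.1 i)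
    by_contra hlt
    nlinarith
  have hBne : ∃ w, w ∈ B := by
    obtain ⟨a, ha, b, hb, hab⟩ := Finset.one_lt_card.1 hs2
    refine ⟨Pi.single ⟨a, ha⟩ 1, single_mem_stdSimplex ℝ _, ⟨b, hb⟩, ?_⟩
    simp [Subtype.ext_iff, hab.symm]
  have hΦs : Function.Surjective Φ := by
    rintro ⟨x, hx⟩
    obtain ⟨w, hw, rfl⟩ := hAsurj x hx
    suffices h : ∃ u ∈ B, ∃ t : unitInterval, φ u t = w by
      obtain ⟨u, hu, t, h⟩ := h
      exact ⟨(⟨u, hu⟩, t), Subtype.ext (by simp [Φ, h])⟩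
    have : Nonempty s := by
      obtain ⟨a, ha⟩ := Finset.card_pos.1 (by omega : 0 < s.card)
      exact ⟨⟨a, ha⟩⟩
    obtain ⟨i, -, hi⟩ := Finset.exists_min_image Finset.univ w Finset.univ_nonempty
    have hi' : ∀ j, w i ≤ w j := fun j => hi j (Finset.mem_univ _)
    have hle : s.card * w i ≤ 1 := by
      rw [← hw.2]
      have := Finset.card_nsmul_le_sum Finset.univ w (w i) (fun j _ => hi' j)
      simpa using this
    by_cases h1 : s.card * w i = 1
    · obtain ⟨u, hu⟩ := hBne
      refine ⟨u, hu, 0, ?_⟩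
      have hwi : w i = c := by
        apply mul_left_cancel₀ hN.ne'; rw [h1, hNc]
      have hsum : ∑ j, (w j - w i) = 0 := by
        rw [Finset.sum_sub_distrib, hw.2]; simp [h1]
      have := (Finset.sum_eq_zero_iff_of_nonneg (fun j _ => sub_nonneg.2 (hi' j))).1 hsum
      ext j
      have := this j (Finset.mem_univ _)
      simp [φ]; linarith
    · have hlt : s.card * w i < 1 := lt_of_le_of_ne hle h1
      set t : ℝ := 1 - s.card * w i with ht
      have ht0 : 0 < t := by linarith
      have ht1 : t ≤ 1 := by
        have := mul_nonneg hN.le (hw.1 i); linarith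
      have htc : (1 - t) * c = w i := by
        rw [ht]; linear_combination w i * hNc
      refine ⟨fun j => (w j - w i) / t, ⟨⟨fun j => div_nonneg (sub_nonneg.2 (hi' j)) ht0.le, ?_⟩,
        i, by simp⟩, ⟨t, ht0.le, ht1⟩, ?_⟩
      · rw [← Finset.sum_div, Finset.sum_sub_distrib, hw.2]
        simp [← ht, ht0.ne']
      · ext j
        simp only [φ, htc]; field_simp; ring
  have hq : Topology.IsQuotientMap Φ := Φ.continuous.isClosedMap.isQuotientMap Φ.continuous hΦs
  -- the homotopy
  obtain ⟨y0, ⟨H⟩⟩ := id_nullhomotopic V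
  let gB : C(B, V) := ⟨fun w => ⟨g (A w), by
      obtain ⟨i, hi, h⟩ := hAB w w.2
      exact hgV i hi h⟩, by
    refine Continuous.subtype_mk ?_ _
    refine hg.comp_continuous (hAc.comp continuous_subtype_val) ?_
    intro w
    obtain ⟨i, hi, h⟩ := hAB w w.2
    exact mem_iUnion₂.2 ⟨i, hi, h⟩⟩
  let K : C(B × unitInterval, V) :=
    ⟨fun p => H (unitInterval.symm p.2, gB p.1), by fun_prop⟩
  have hK : Function.FactorsThrough K Φ := by
    rintro ⟨w, t⟩ ⟨w', t'⟩ h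
    have h1 : φ w t = φ w' t' := hAinj _ _ (hφ1 _ _ w.2.1.2) (hφ1 _ _ w'.2.1.2)
      (congrArg Subtype.val h)
    have htt : t = t' := Subtype.ext (le_antisymm (key _ _ _ _ h1.symm) (key _ _ _ _ h1))
    subst htt
    by_cases ht : t = 0
    · subst ht; simp [K]
    · have : w = w' := by
        ext i
        have h2 := congrFun h1 i
        have ht' : (t:ℝ) ≠ 0 := fun h => ht (Subtype.ext h)
        simp only [φ] at h2
        exact mul_left_cancel₀ ht' (by linarith)
      rw [this]
  let h0 : C(convexHull ℝ (s : Set E), V) := hq.lift K hK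
  have hh0 : ∀ p, h0 (Φ p) = K p := fun p => by
    have := hq.lift_comp K hK
    exact DFunLike.congr_fun this p
  refine ⟨fun x => if hx : x ∈ convexHull ℝ (s : Set E) then h0 ⟨x, hx⟩ else g x, ?_, ?_, ?_⟩
  · rw [continuousOn_iff_continuous_domRestrict]
    have : (convexHull ℝ (s : Set E)).domRestrict (fun x => if hx : x ∈ convexHull ℝ (s : Set E)
        then (h0 ⟨x, hx⟩ : Y) else g x) = fun x => (h0 x : Y) := by
      ext x; simp [Set.domRestrict]
    rw [this]; fun_prop
  · intro x hx; simp [hx]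
  · intro i hi x hx
    have hx' : x ∈ convexHull ℝ (s : Set E) := convexHull_mono sdiff_subset hx
    obtain ⟨w, hw, rfl⟩ := hBA i hi x hx
    have hΦ1 : Φ (⟨w, hw⟩, 1) = ⟨A w, hx'⟩ := Subtype.ext (by simp [Φ, φ])
    simp only [hx', dif_pos]
    rw [← hΦ1, hh0]
    simp [K, gB]

/-- Let `𝒰` be a locally finite good open cover of a topological space `Y`.
Let `P` be a finite simplicial complex in `ℝⁿ`, let `L` be a subcomplex of `P`, and set
`D = |L| ∪ P⁰` where `P⁰` is the set of vertices of `P`. Every continuous `(𝒰,P)`-small map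
`f : D → Y` extends to a continuous `(𝒰,P)`-small map `f' : |P| → Y` such that for every
`U ∈ 𝒰` and every face `s` of `P`, if `f(convexHull s ∩ D) ⊆ U` then
`f'(convexHull s) ⊆ U`. -/
theorem small_map_extension
    {n : ℕ} {Y : Type} [TopologicalSpace Y]
    (𝒰 : Set (Set Y)) (hopen : ∀ U ∈ 𝒰, IsOpen U) (hcov : ⋃₀ 𝒰 = Set.univ)
    (hlf : ∀ y : Y, ∃ W, IsOpen W ∧ y ∈ W ∧ {U ∈ 𝒰 | (U ∩ W).Nonempty}.Finite)
    (hgood : ∀ t : Finset (Set Y), ↑t ⊆ 𝒰 → t.Nonempty → (⋂₀ (↑t : Set (Set Y))).Nonempty →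
      ContractibleSpace ↥(⋂₀ (↑t : Set (Set Y))))
    (P L : Geometry.SimplicialComplex ℝ (Fin n → ℝ)) (hP : P.faces.Finite)
    (hL : L.faces ⊆ P.faces)
    (f : C(↥(L.space ∪ P.vertices), Y))
    (hsmall : IsSmallMap 𝒰 P (L.space ∪ P.vertices) f) :
    ∃ f' : C(↥P.space, Y),
      (∀ (x : Fin n → ℝ) (hx : x ∈ L.space ∪ P.vertices) (hx' : x ∈ P.space),
        f' ⟨x, hx'⟩ = f ⟨x, hx⟩) ∧
      IsSmallMap 𝒰 P P.space f' ∧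
      (∀ U ∈ 𝒰, ∀ s ∈ P.faces,
        f '' (Subtype.val ⁻¹' convexHull ℝ (s : Set (Fin n → ℝ))) ⊆ U →
        f' '' (Subtype.val ⁻¹' convexHull ℝ (s : Set (Fin n → ℝ))) ⊆ U) := by
  classical
  rcases isEmpty_or_nonempty Y with hY | ⟨⟨y0⟩⟩
  · have hne : IsEmpty P.space := by
      refine ⟨fun x => ?_⟩
      obtain ⟨s, hs, -⟩ := Geometry.SimplicialComplex.mem_space_iff.1 x.2
      obtain ⟨v, hv⟩ := P.nonempty_of_mem_faces hs
      have : v ∈ P.vertices := by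
        rw [Geometry.SimplicialComplex.vertices_eq]; exact mem_biUnion hs hv
      exact hY.elim (f ⟨v, Or.inr this⟩)
    refine ⟨⟨fun x => hne.elim x, by fun_prop⟩, fun x hx hx' => hne.elim ⟨x, hx'⟩, ?_, ?_⟩
    · intro s hs
      obtain ⟨U, hU, -⟩ := hsmall s hs
      refine ⟨U, hU, ?_⟩
      rintro _ ⟨x, -, -⟩
      exact hne.elim x
    · rintro U hU s hs - _ ⟨x, -, -⟩
      exact hne.elim x
  let D : Set (Fin n → ℝ) := L.space ∪ P.vertices
  have hvert : ∀ s ∈ P.faces, ∀ v ∈ s, v ∈ P.vertices := by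
    intro s hs v hv
    rw [Geometry.SimplicialComplex.vertices_eq]; exact mem_biUnion hs hv
  let 𝒱 : Finset (Fin n → ℝ) → Set (Set Y) := fun s =>
    {U | U ∈ 𝒰 ∧ f '' (Subtype.val ⁻¹' convexHull ℝ (s : Set (Fin n → ℝ))) ⊆ U}
  let V : Finset (Fin n → ℝ) → Set Y := fun s => ⋂₀ 𝒱 s
  have hfV : ∀ (s : Finset (Fin n → ℝ)) x (hx : x ∈ D), x ∈ convexHull ℝ (s : Set (Fin n → ℝ)) → f ⟨x, hx⟩ ∈ V s := by
    intro s x hx hxs U hU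
    exact hU.2 ⟨⟨x, hx⟩, hxs, rfl⟩
  have hVmono : ∀ s t : Finset (Fin n → ℝ), t ⊆ s → V t ⊆ V s := by
    intro s t hts
    refine sInter_subset_sInter fun U hU => ⟨hU.1, ?_⟩
    exact (image_mono (preimage_mono (convexHull_mono (by exact_mod_cast hts)))).trans hU.2
  have hVc : ∀ s ∈ P.faces, ContractibleSpace (V s) := by
    intro s hs
    obtain ⟨v, hv⟩ := P.nonempty_of_mem_faces hs
    have hvD : v ∈ D := Or.inr (hvert s hs v hv)
    have hvV : f ⟨v, hvD⟩ ∈ V s := hfV s v hvD (subset_convexHull ℝ _ hv)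
    obtain ⟨W, -, hyW, hW⟩ := hlf (f ⟨v, hvD⟩)
    have hfin : (𝒱 s).Finite := hW.subset fun U hU => ⟨hU.1, _, hvV U hU, hyW⟩
    have h := hgood hfin.toFinset (by rw [hfin.coe_toFinset]; exact fun U hU => hU.1)
      (by
        obtain ⟨U, hU, h⟩ := hsmall s hs
        exact ⟨U, hfin.mem_toFinset.2 ⟨hU, h⟩⟩)
      (by rw [hfin.coe_toFinset]; exact ⟨_, hvV⟩)
    rwa [hfin.coe_toFinset] at h
  let Good : Set (Finset (Fin n → ℝ)) → Prop := fun Q =>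
    L.faces ⊆ Q ∧ (∀ x ∈ P.vertices, {x} ∈ Q) ∧ Q ⊆ P.faces ∧
    (∀ s ∈ Q, ∀ t ⊆ s, t.Nonempty → t ∈ Q) ∧
    ∃ g : (Fin n → ℝ) → Y, ContinuousOn g (⋃ s ∈ Q, convexHull ℝ (s : Set (Fin n → ℝ))) ∧
      (∀ x (hx : x ∈ D), g x = f ⟨x, hx⟩) ∧
      ∀ s ∈ Q, MapsTo g (convexHull ℝ (s : Set (Fin n → ℝ))) (V s)
  have hbase : Good (L.faces ∪ {s | ∃ x ∈ P.vertices, s = {x}}) := by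
    refine ⟨subset_union_left, fun x hx => Or.inr ⟨x, hx, rfl⟩, ?_, ?_, ?_⟩
    · rintro s (hs | ⟨x, hx, rfl⟩)
      · exact hL hs
      · exact hx
    · rintro s (hs | ⟨x, hx, rfl⟩) t hts ht
      · exact Or.inl (L.down_closed hs hts ht)
      · right
        refine ⟨x, hx, ?_⟩
        exact (Finset.subset_singleton_iff.1 hts).resolve_left ht.ne_empty
    · have hsub : ∀ s ∈ L.faces ∪ {s | ∃ x ∈ P.vertices, s = {x}},
          convexHull ℝ (s : Set (Fin n → ℝ)) ⊆ D := by
        rintro s (hs | ⟨x, hx, rfl⟩)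
        · exact (Geometry.SimplicialComplex.convexHull_subset_space hs).trans subset_union_left
        · simp only [Finset.coe_singleton, convexHull_singleton, singleton_subset_iff]
          exact Or.inr hx
      have hval : ∀ x (hx : x ∈ D), (fun x => if hx : x ∈ D then f ⟨x, hx⟩ else y0) x
          = f ⟨x, hx⟩ := fun x hx => dif_pos hx
      refine ⟨fun x => if hx : x ∈ D then f ⟨x, hx⟩ else y0, ?_, hval, ?_⟩
      · refine ContinuousOn.mono ?_ (iUnion₂_subset hsub)
        rw [continuousOn_iff_continuous_domRestrict]
        convert f.continuous using 1
        ext x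
        exact hval x x.2
      · intro s hs x hx
        rw [hval x (hsub s hs hx)]
        exact hfV s x _ hx
  have hGfin : {Q | Good Q}.Finite := hP.finite_subsets.subset fun Q hQ => hQ.2.2.1
  obtain ⟨Q, hQ, hmax⟩ := hGfin.exists_maximal ⟨_, hbase⟩
  obtain ⟨hLQ, hvQ, hQP, hQd, g, hgc, hgf, hgV⟩ := hQ
  have hQall : P.faces ⊆ Q := by
    by_contra hnot
    have hne : (P.faces \ Q).Nonempty := by
      obtain ⟨s, hs, hsQ⟩ := not_subset.1 hnot
      exact ⟨s, hs, hsQ⟩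
    obtain ⟨s, ⟨hsP, hsQ⟩, hsmin⟩ := (hP.subset sdiff_subset).exists_minimal hne
    have hprop : ∀ t, t ⊂ s → t.Nonempty → t ∈ Q := by
      intro t hts ht
      by_contra htQ
      exact hts.2 (hsmin ⟨P.down_closed hsP hts.1 ht, htQ⟩ hts.1)
    have hs2 : 1 < s.card := by
      by_contra hle
      have h1 : s.card = 1 := by
        have := Finset.card_pos.2 (P.nonempty_of_mem_faces hsP); omega
      obtain ⟨x, rfl⟩ := Finset.card_eq_one.1 h1
      exact hsQ (hvQ x hsP)
    have hbd : ∀ i ∈ s, s.erase i ∈ Q := fun i hi => hprop _ (Finset.erase_ssubset hi) (by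
      rw [← Finset.card_pos, Finset.card_erase_of_mem hi]; omega)
    have hco : ∀ i, (s : Set (Fin n → ℝ)) \ {i} = ((s.erase i : Finset _) : Set _) := by
      intro i; simp
    have := hVc s hsP
    obtain ⟨h, hhc, hhV, hhg⟩ := cone_ext s (P.indep hsP) hs2 (V s) g
      (hgc.mono (iUnion₂_subset fun i hi => by
        rw [hco]
        exact subset_biUnion_of_mem (u := fun s : Finset (Fin n → ℝ) =>
          convexHull ℝ (s : Set (Fin n → ℝ))) (hbd i hi)))
      (fun i hi x hx => by
        rw [hco] at hx
        exact hVmono _ _ (Finset.erase_subset i s) (hgV _ (hbd i hi) hx))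
    have hagree : ∀ t ∈ Q, ∀ x ∈ convexHull ℝ (t : Set (Fin n → ℝ)),
        x ∈ convexHull ℝ (s : Set (Fin n → ℝ)) → h x = g x := by
      intro t ht x hxt hxs
      have hx := P.inter_subset_convexHull (hQP ht) hsP ⟨hxt, hxs⟩
      have : ∃ i ∈ s, i ∉ t := by
        by_contra hcon
        push Not at hcon
        exact hsQ (hQd t ht s hcon (P.nonempty_of_mem_faces hsP))
      obtain ⟨i, hi, hit⟩ := this
      refine hhg i hi (convexHull_mono ?_ hx)
      rintro j ⟨hjt, hjs⟩
      refine ⟨hjs, ?_⟩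
      rintro rfl
      exact hit hjt
    let k : (Fin n → ℝ) → Y := fun x => if x ∈ convexHull ℝ (s : Set (Fin n → ℝ)) then h x else g x
    have hks : EqOn k h (convexHull ℝ (s : Set (Fin n → ℝ))) := fun x hx => if_pos hx
    have hkQ : ∀ t ∈ Q, EqOn k g (convexHull ℝ (t : Set (Fin n → ℝ))) := by
      intro t ht x hx
      by_cases hxs : x ∈ convexHull ℝ (s : Set (Fin n → ℝ))
      · rw [hks hxs]; exact hagree t ht x hx hxs
      · exact if_neg hxs
    have hclosed : ∀ t : Finset (Fin n → ℝ), IsClosed (convexHull ℝ (t : Set (Fin n → ℝ))) :=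
      fun t => (t.finite_toSet.isCompact_convexHull ℝ).isClosed
    have hgood' : Good (insert s Q) := by
      refine ⟨hLQ.trans (subset_insert _ _), fun x hx => Or.inr (hvQ x hx),
        insert_subset hsP hQP, ?_, k, ?_, ?_, ?_⟩
      · rintro t (rfl | ht) u hu hune
        · rcases hu.eq_or_ssubset with rfl | hss
          · exact Or.inl rfl
          · exact Or.inr (hprop u hss hune)
        · exact Or.inr (hQd t ht u hu hune)
      · rw [biUnion_insert]
        refine ContinuousOn.union_of_isClosed (hhc.congr hks) (hgc.congr ?_) (hclosed s)
          ((hP.subset hQP).isClosed_biUnion fun t _ => hclosed t)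
        intro x hx
        obtain ⟨t, ht, hxt⟩ := mem_iUnion₂.1 hx
        exact hkQ t ht hxt
      · intro x hx
        rw [← hgf x hx]
        have : ∃ t ∈ Q, x ∈ convexHull ℝ (t : Set (Fin n → ℝ)) := by
          rcases hx with hx | hx
          · obtain ⟨t, ht, hxt⟩ := Geometry.SimplicialComplex.mem_space_iff.1 hx
            exact ⟨t, hLQ ht, hxt⟩
          · exact ⟨{x}, hvQ x hx, by simp⟩
        obtain ⟨t, ht, hxt⟩ := this
        exact hkQ t ht hxt
      · rintro t (rfl | ht) x hx
        · rw [hks hx]; exact hhV hx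
        · rw [hkQ t ht hx]; exact hgV t ht hx
    exact hsQ (hmax hgood' (subset_insert _ _) (mem_insert _ _))
  have hthird : ∀ U ∈ 𝒰, ∀ s ∈ P.faces,
        f '' (Subtype.val ⁻¹' convexHull ℝ (s : Set (Fin n → ℝ))) ⊆ U →
        (fun x : P.space => g x) '' (Subtype.val ⁻¹' convexHull ℝ (s : Set (Fin n → ℝ))) ⊆ U := by
    rintro U hU s hs h _ ⟨x, hx, rfl⟩
    exact hgV s (hQall hs) hx U ⟨hU, h⟩
  refine ⟨⟨fun x => g x, ?_⟩, fun x hx _ => hgf x hx, ?_, hthird⟩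
  · refine hgc.comp_continuous continuous_subtype_val fun x => ?_
    obtain ⟨s, hs, hx⟩ := Geometry.SimplicialComplex.mem_space_iff.1 x.2
    exact mem_iUnion₂.2 ⟨s, hQall hs, hx⟩
  · intro s hs
    obtain ⟨U, hU, h⟩ := hsmall s hs
    exact ⟨U, hU, hthird U hU s hs h⟩
end

section
/- Let P be a simplicial complex in ℝⁿ and let x, y ∈ |P|. If the intersection St(x,P) ∩ St(y,P) of the open stars of x and y is nonempty, then there exists z ∈ |P| such that St(x,P) ∩ St(y,P) = St(z,P). -/
open Set Geometry

/-- The open simplex spanned by a finite set `s`: convex combinations of the points of `s`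
with all coefficients strictly positive. -/
def openSimplex {n : ℕ} (s : Finset (Fin n → ℝ)) : Set (Fin n → ℝ) :=
  {x | ∃ w : (Fin n → ℝ) → ℝ, (∀ v ∈ s, 0 < w v) ∧
    (∑ v ∈ s, w v) = 1 ∧ (∑ v ∈ s, w v • v) = x}

/-- The open star of a point `x` with respect to a simplicial complex `P`: the union of the
open simplexes of all faces of `P` whose convex hull (closure) contains `x`. -/
def openStar {n : ℕ} (P : Geometry.SimplicialComplex ℝ (Fin n → ℝ))
    (x : Fin n → ℝ) : Set (Fin n → ℝ) :=
  ⋃ s ∈ {s ∈ P.faces | x ∈ convexHull ℝ (s : Set (Fin n → ℝ))}, openSimplex s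

open Set Geometry

theorem openSimplex_subset_hull {n : ℕ} {s : Finset (Fin n → ℝ)} {p : Fin n → ℝ}
    (hp : p ∈ openSimplex s) : p ∈ convexHull ℝ (s : Set (Fin n → ℝ)) := by
  obtain ⟨w, h0, h1, h2⟩ := hp
  rw [Finset.mem_convexHull']
  exact ⟨w, fun v hv => (h0 v hv).le, h1, h2⟩

theorem subset_of_openSimplex {n : ℕ} (P : Geometry.SimplicialComplex ℝ (Fin n → ℝ))
    {s t : Finset (Fin n → ℝ)} (hs : s ∈ P.faces) (ht : t ∈ P.faces) {p : Fin n → ℝ}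
    (hp : p ∈ openSimplex s) (hpt : p ∈ convexHull ℝ (t : Set (Fin n → ℝ))) : s ⊆ t := by
  classical
  have h := P.inter_subset_convexHull hs ht ⟨openSimplex_subset_hull hp, hpt⟩
  rw [← Finset.coe_inter, Finset.mem_convexHull'] at h
  obtain ⟨w, h0, h1, h2⟩ := hp
  obtain ⟨w', h0', h1', h2'⟩ := h
  have e1 : ∑ v ∈ s, (if v ∈ t then w' v else 0) = 1 := by
    rw [← Finset.sum_filter, Finset.filter_mem_eq_inter, h1']
  have e2 : ∑ v ∈ s, (if v ∈ t then w' v else 0) • v = p := by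
    simp only [ite_smul, zero_smul]
    rw [← Finset.sum_filter, Finset.filter_mem_eq_inter, h2']
  have key := affineIndependent_iff.1 (P.indep hs) Finset.univ
    (fun v => w v - (if (v : Fin n → ℝ) ∈ t then w' v else 0))
    (by
      rw [Finset.sum_coe_sort s (fun v => w v - (if v ∈ t then w' v else 0)),
        Finset.sum_sub_distrib, h1, e1, sub_self])
    (by
      rw [Finset.sum_coe_sort s (fun v => (w v - (if v ∈ t then w' v else 0)) • v)]
      simp only [sub_smul]
      rw [Finset.sum_sub_distrib, h2, e2, sub_self])
  intro v hv
  by_contra hvt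
  have := key ⟨v, hv⟩ (Finset.mem_univ _)
  simp only [hvt, if_false, sub_zero] at this
  exact (h0 v hv).ne' this

theorem exists_carrier {n : ℕ} (P : Geometry.SimplicialComplex ℝ (Fin n → ℝ))
    {x : Fin n → ℝ} (hx : x ∈ P.space) : ∃ s ∈ P.faces, x ∈ openSimplex s := by
  classical
  obtain ⟨s, hs, h⟩ := Geometry.SimplicialComplex.mem_space_iff.1 hx
  rw [Finset.mem_convexHull'] at h
  obtain ⟨w, h0, h1, h2⟩ := h
  have e1 : ∑ v ∈ s.filter (fun v => w v ≠ 0), w v = 1 := by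
    rw [Finset.sum_filter_ne_zero, h1]
  refine ⟨s.filter (fun v => w v ≠ 0), P.down_closed hs (Finset.filter_subset _ _) ?_, w,
    ?_, e1, ?_⟩
  · rw [Finset.nonempty_iff_ne_empty]
    intro h
    rw [h] at e1
    simp at e1
  · intro v hv
    rw [Finset.mem_filter] at hv
    exact lt_of_le_of_ne (h0 v hv.1) (Ne.symm hv.2)
  · rw [← h2]
    apply Finset.sum_filter_of_ne
    intro v _ hv h
    exact hv (by rw [h, zero_smul])

theorem mem_openStar_iff {n : ℕ} (P : Geometry.SimplicialComplex ℝ (Fin n → ℝ))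
    {s : Finset (Fin n → ℝ)} (hs : s ∈ P.faces) {x p : Fin n → ℝ} (hx : x ∈ openSimplex s) :
    p ∈ openStar P x ↔ ∃ t ∈ P.faces, s ⊆ t ∧ p ∈ openSimplex t := by
  simp only [openStar, mem_iUnion, mem_setOf_eq, exists_prop]
  constructor
  · rintro ⟨t, ⟨ht, hxt⟩, hp⟩
    exact ⟨t, ht, subset_of_openSimplex P hs ht hx hxt, hp⟩
  · rintro ⟨t, ht, hst, hp⟩
    exact ⟨t, ⟨ht, convexHull_mono (Finset.coe_subset.2 hst) (openSimplex_subset_hull hx)⟩, hp⟩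

/-- If the intersection of the open stars of two points `x, y` of `|P|` is
nonempty, then it is itself the open star of some point `z` of `|P|`. -/
theorem openStar_inter_openStar
    {n : ℕ} (P : Geometry.SimplicialComplex ℝ (Fin n → ℝ))
    (x y : Fin n → ℝ) (hx : x ∈ P.space) (hy : y ∈ P.space)
    (hne : (openStar P x ∩ openStar P y).Nonempty) :
    ∃ z ∈ P.space, openStar P x ∩ openStar P y = openStar P z := by
  classical
  obtain ⟨a, ha, hxa⟩ := exists_carrier P hx
  obtain ⟨b, hb, hyb⟩ := exists_carrier P hy
  have key : ∀ p, p ∈ openStar P x ∩ openStar P y ↔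
      ∃ t ∈ P.faces, a ∪ b ⊆ t ∧ p ∈ openSimplex t := by
    intro p
    rw [mem_inter_iff, mem_openStar_iff P ha hxa, mem_openStar_iff P hb hyb]
    constructor
    · rintro ⟨⟨t, ht, hat, hp⟩, t', ht', hbt, hp'⟩
      exact ⟨t, ht, Finset.union_subset hat (hbt.trans
        (subset_of_openSimplex P ht' ht hp' (openSimplex_subset_hull hp))), hp⟩
    · rintro ⟨t, ht, h, hp⟩
      exact ⟨⟨t, ht, Finset.subset_union_left.trans h, hp⟩,
        t, ht, Finset.subset_union_right.trans h, hp⟩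
  obtain ⟨p, hp⟩ := hne
  obtain ⟨t, ht, hab, -⟩ := (key p).1 hp
  have hne : (a ∪ b).Nonempty :=
    (Geometry.SimplicialComplex.nonempty_of_mem_faces ha).mono Finset.subset_union_left
  have hf : a ∪ b ∈ P.faces := P.down_closed ht hab hne
  have hc : (0 : ℝ) < (a ∪ b).card := by exact_mod_cast hne.card_pos
  have hz : (∑ v ∈ a ∪ b, ((a ∪ b).card : ℝ)⁻¹ • v) ∈ openSimplex (a ∪ b) :=
    ⟨fun _ => ((a ∪ b).card : ℝ)⁻¹, fun _ _ => inv_pos.2 hc, by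
      rw [Finset.sum_const, nsmul_eq_mul, mul_inv_cancel₀ hc.ne'], rfl⟩
  refine ⟨_, Geometry.SimplicialComplex.convexHull_subset_space hf
    (openSimplex_subset_hull hz), ?_⟩
  ext q
  rw [key, mem_openStar_iff P hf hz]
end

section
/- Let P be a simplicial complex in ℝⁿ and let x ∈ |P|. Then the open star St(x,P) is star-shaped with center x: it contains x, and for every w ∈ St(x,P) the whole segment joining w to x is contained in St(x,P). In particular, St(x,P) is a contractible subspace of ℝⁿ. -/
open Set Geometry

/-- The open star of a point `x ∈ |P|` is star-shaped with center `x`: it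
contains `x`, and for every `w` in it the segment from `w` to `x` stays inside it. In
particular it is a contractible subspace of `ℝⁿ`. -/
theorem openStar_starShaped_contractible
    {n : ℕ} (P : Geometry.SimplicialComplex ℝ (Fin n → ℝ))
    (x : Fin n → ℝ) (hx : x ∈ P.space) :
    x ∈ openStar P x ∧
    (∀ w ∈ openStar P x, segment ℝ w x ⊆ openStar P x) ∧
    ContractibleSpace ↥(openStar P x) := by
  classical
  have h1 : x ∈ openStar P x := by
    obtain ⟨s, hs, hxs⟩ := Geometry.SimplicialComplex.mem_space_iff.1 hx
    obtain ⟨c, hc0, hc1, hcx⟩ := Finset.mem_convexHull'.1 hxs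
    have e1 : ∑ v ∈ s.filter (fun v => c v ≠ 0), c v = 1 := by
      rw [Finset.sum_filter_ne_zero, hc1]
    have e2 : ∑ v ∈ s.filter (fun v => c v ≠ 0), c v • v = x := by
      rw [← hcx]
      apply Finset.sum_subset (Finset.filter_subset _ _)
      intro v hv hv'
      have : c v = 0 := by
        by_contra h
        exact hv' (Finset.mem_filter.2 ⟨hv, h⟩)
      rw [this, zero_smul]
    have hpos : ∀ v ∈ s.filter (fun v => c v ≠ 0), 0 < c v := by
      intro v hv
      rw [Finset.mem_filter] at hv
      exact lt_of_le_of_ne (hc0 v hv.1) (Ne.symm hv.2)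
    have hne : (s.filter (fun v => c v ≠ 0)).Nonempty := by
      rw [Finset.nonempty_iff_ne_empty]
      intro h
      rw [h] at e1
      simp at e1
    refine Set.mem_biUnion (x := s.filter (fun v => c v ≠ 0)) ⟨?_, ?_⟩ ⟨c, hpos, e1, e2⟩
    · exact P.down_closed hs (Finset.filter_subset _ _) hne
    · exact Finset.mem_convexHull'.2 ⟨c, fun v hv => (hpos v hv).le, e1, e2⟩
  have h2 : ∀ w ∈ openStar P x, segment ℝ w x ⊆ openStar P x := by
    intro w hw
    obtain ⟨s, ⟨hs, hxs⟩, d, hd0, hd1, hdw⟩ := Set.mem_iUnion₂.1 hw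
    rintro y ⟨a, b, ha, hb, hab, rfl⟩
    rcases ha.eq_or_lt with h | h
    · subst h
      have : b = 1 := by linarith
      subst this
      simpa using h1
    · obtain ⟨c, hc0, hc1, hcx⟩ := Finset.mem_convexHull'.1 hxs
      refine Set.mem_biUnion (x := s) ⟨hs, hxs⟩ ⟨fun v => a * d v + b * c v, ?_, ?_, ?_⟩
      · intro v hv
        exact add_pos_of_pos_of_nonneg (mul_pos h (hd0 v hv)) (mul_nonneg hb (hc0 v hv))
      · rw [Finset.sum_add_distrib, ← Finset.mul_sum, ← Finset.mul_sum, hd1, hc1]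
        linarith
      · simp only [add_smul, mul_smul]
        rw [Finset.sum_add_distrib, ← Finset.smul_sum, ← Finset.smul_sum, hdw, hcx]
  refine ⟨h1, h2, ?_⟩
  have h3 : StarConvex ℝ x (openStar P x) := by
    rw [starConvex_iff_segment_subset]
    intro y hy
    rw [segment_symm]
    exact h2 y hy
  exact h3.contractibleSpace ⟨x, h1⟩
end

section
/- Let L be a locally finite simplicial complex in ℝⁿ, i.e., every point of |L| has a neighbourhood meeting the convex hulls of only finitely many faces of L. Then the family {St(x,L) : x ∈ |L|} of open stars of points of |L| is a good open cover of |L| which is locally finite (as a family of distinct sets): each open star St(x,L) is an open subset of |L| containing x, and every nonempty intersection of finitely many open stars is contractible. -/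
open Set Geometry

theorem osg_hull {n : ℕ} {s : Finset (Fin n → ℝ)} {x : Fin n → ℝ} (h : x ∈ openSimplex s) :
    x ∈ convexHull ℝ (s : Set (Fin n → ℝ)) := by
  obtain ⟨w, h0, h1, h2⟩ := h
  exact Finset.mem_convexHull'.2 ⟨w, fun v hv => (h0 v hv).le, h1, h2⟩

/-- Carrier from nonnegative weights. -/
theorem osg_carrier_w {n : ℕ} {s : Finset (Fin n → ℝ)} {x : Fin n → ℝ}
    (w : (Fin n → ℝ) → ℝ) (h0 : ∀ v ∈ s, 0 ≤ w v) (h1 : ∑ v ∈ s, w v = 1)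
    (h2 : ∑ v ∈ s, w v • v = x) (u : Finset (Fin n → ℝ)) (hus : u ⊆ s)
    (hu : ∀ v ∈ s, v ∈ u ↔ w v ≠ 0) :
    u.Nonempty ∧ x ∈ openSimplex u := by
  have e1 : ∑ v ∈ u, w v = 1 := by
    rw [← h1]
    refine Finset.sum_subset hus fun v hv hvu => ?_
    by_contra h
    exact hvu ((hu v hv).2 h)
  refine ⟨?_, w, fun v hv => lt_of_le_of_ne (h0 v (hus hv)) (Ne.symm ((hu v (hus hv)).1 hv)),
    e1, ?_⟩
  · rw [Finset.nonempty_iff_ne_empty]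
    rintro rfl
    simp at e1
  · rw [← h2]
    refine Finset.sum_subset hus fun v hv hvu => ?_
    have : w v = 0 := by
      by_contra h
      exact hvu ((hu v hv).2 h)
    simp [this]

theorem osg_carrier {n : ℕ} {s : Finset (Fin n → ℝ)} {x : Fin n → ℝ}
    (h : x ∈ convexHull ℝ (s : Set (Fin n → ℝ))) :
    ∃ u ⊆ s, u.Nonempty ∧ x ∈ openSimplex u := by
  classical
  obtain ⟨w, h0, h1, h2⟩ := Finset.mem_convexHull'.1 h
  exact ⟨s.filter (fun v => w v ≠ 0), Finset.filter_subset _ _,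
    osg_carrier_w w h0 h1 h2 _ (Finset.filter_subset _ _) (fun v hv => by simp [hv])⟩

theorem osg_sub {n : ℕ} (L : Geometry.SimplicialComplex ℝ (Fin n → ℝ))
    {s s' : Finset (Fin n → ℝ)} (hs : s ∈ L.faces) (hs' : s' ∈ L.faces) {p : Fin n → ℝ}
    (hp : p ∈ openSimplex s) (hp' : p ∈ convexHull ℝ (s' : Set (Fin n → ℝ))) : s ⊆ s' := by
  classical
  have hq := L.inter_subset_convexHull hs hs' ⟨osg_hull hp, hp'⟩
  rw [← Finset.coe_inter] at hq
  obtain ⟨w, h0, h1, h2⟩ := hp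
  obtain ⟨w', h0', h1', h2'⟩ := Finset.mem_convexHull'.1 hq
  have hi := L.indep hs
  rw [affineIndependent_iff] at hi
  intro v hv
  by_contra hvs
  have e1 : ∑ y ∈ s, (if y ∈ s' then w' y else 0) = 1 := by
    rw [← Finset.sum_filter, Finset.filter_mem_eq_inter, h1']
  have e2 : ∑ y ∈ s, (if y ∈ s' then w' y else 0) • y = p := by
    rw [← h2', ← Finset.filter_mem_eq_inter, Finset.sum_filter]
    refine Finset.sum_congr rfl fun y _ => ?_
    split_ifs <;> simp
  have := hi Finset.univ (fun y => w y - (if (y : Fin n → ℝ) ∈ s' then w' y else 0)) ?_ ?_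
    ⟨v, hv⟩ (Finset.mem_univ _)
  · simp only [hvs, if_false, sub_zero] at this
    exact (h0 v hv).ne' this
  · rw [Finset.sum_coe_sort s (fun y => w y - (if (y : Fin n → ℝ) ∈ s' then w' y else 0)),
      Finset.sum_sub_distrib, h1, e1, sub_self]
  · rw [Finset.sum_coe_sort s (fun y => (w y - (if (y : Fin n → ℝ) ∈ s' then w' y else 0)) • y)]
    simp only [sub_smul]
    rw [Finset.sum_sub_distrib, h2, e2, sub_self]

theorem osg_mem_of {n : ℕ} (L : Geometry.SimplicialComplex ℝ (Fin n → ℝ))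
    {s : Finset (Fin n → ℝ)} (hs : s ∈ L.faces) {x q : Fin n → ℝ}
    (hq : q ∈ openSimplex s) (hx : x ∈ convexHull ℝ (s : Set (Fin n → ℝ))) :
    q ∈ openStar L x :=
  Set.mem_biUnion (show s ∈ {s ∈ L.faces | x ∈ convexHull ℝ (s : Set (Fin n → ℝ))} from ⟨hs, hx⟩) hq

theorem osg_face {n : ℕ} (L : Geometry.SimplicialComplex ℝ (Fin n → ℝ)) {x : Fin n → ℝ}
    (hx : x ∈ L.space) : ∃ u ∈ L.faces, x ∈ openSimplex u := by
  obtain ⟨s, hs, hxs⟩ := SimplicialComplex.mem_space_iff.1 hx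
  obtain ⟨u, hus, hu, hxu⟩ := osg_carrier hxs
  exact ⟨u, L.down_closed hs hus hu, hxu⟩

theorem osg_iff {n : ℕ} (L : Geometry.SimplicialComplex ℝ (Fin n → ℝ)) {x q : Fin n → ℝ} :
    q ∈ openStar L x ↔ q ∈ L.space ∧ ∀ s ∈ L.faces, q ∈ convexHull ℝ (s : Set (Fin n → ℝ)) →
      x ∈ convexHull ℝ (s : Set (Fin n → ℝ)) := by
  constructor
  · intro h
    obtain ⟨s, ⟨hs, hxs⟩, hq⟩ := Set.mem_iUnion₂.1 h
    refine ⟨SimplicialComplex.mem_space_iff.2 ⟨s, hs, osg_hull hq⟩, fun s' hs' hq' => ?_⟩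
    exact convexHull_mono (by exact_mod_cast osg_sub L hs hs' hq hq') hxs
  · rintro ⟨hq, h⟩
    obtain ⟨u, hu, hqu⟩ := osg_face L hq
    exact osg_mem_of L hu hqu (h u hu (osg_hull hqu))

theorem osg_seg {n : ℕ} {s : Finset (Fin n → ℝ)} {p b : Fin n → ℝ} (hp : p ∈ openSimplex s)
    (hb : b ∈ convexHull ℝ (s : Set (Fin n → ℝ))) {α β : ℝ} (hα : 0 ≤ α) (hβ : 0 < β)
    (h : α + β = 1) : α • b + β • p ∈ openSimplex s := by
  obtain ⟨w, h0, h1, h2⟩ := hp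
  obtain ⟨w', h0', h1', h2'⟩ := Finset.mem_convexHull'.1 hb
  refine ⟨fun v => α * w' v + β * w v, fun v hv => ?_, ?_, ?_⟩
  · have := mul_nonneg hα (h0' v hv)
    have := mul_pos hβ (h0 v hv)
    show 0 < α * w' v + β * w v
    linarith
  · rw [Finset.sum_add_distrib, ← Finset.mul_sum, ← Finset.mul_sum, h1, h1']
    linarith
  · simp only [add_smul, mul_smul]
    rw [Finset.sum_add_distrib, ← Finset.smul_sum, ← Finset.smul_sum, h2, h2']

/-- A point whose open simplex sees all of `t`. -/
theorem osg_center {n : ℕ} {s t : Finset (Fin n → ℝ)} (ht : t.Nonempty)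
    (hts : ∀ x ∈ t, x ∈ convexHull ℝ (s : Set (Fin n → ℝ))) :
    ∃ u ⊆ s, u.Nonempty ∧ (∑ x ∈ t, (t.card : ℝ)⁻¹ • x) ∈ openSimplex u ∧
      ∀ x ∈ t, x ∈ convexHull ℝ (u : Set (Fin n → ℝ)) := by
  classical
  have key : ∀ x : Fin n → ℝ, ∃ w : (Fin n → ℝ) → ℝ, x ∈ t → ((∀ v ∈ s, 0 ≤ w v) ∧
      ∑ v ∈ s, w v = 1 ∧ ∑ v ∈ s, w v • v = x) := by
    intro x
    by_cases hx : x ∈ t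
    · obtain ⟨w, hw⟩ := Finset.mem_convexHull'.1 (hts x hx)
      exact ⟨w, fun _ => hw⟩
    · exact ⟨0, fun h => absurd h hx⟩
  choose W hW using key
  have hc : (0 : ℝ) < (t.card : ℝ)⁻¹ := by
    have : (0 : ℝ) < t.card := by exact_mod_cast ht.card_pos
    positivity
  let B : (Fin n → ℝ) → ℝ := fun v => ∑ x ∈ t, (t.card : ℝ)⁻¹ * W x v
  have B0 : ∀ v ∈ s, 0 ≤ B v := fun v hv =>
    Finset.sum_nonneg fun x hx => mul_nonneg hc.le ((hW x hx).1 v hv)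
  have B1 : ∑ v ∈ s, B v = 1 := by
    rw [Finset.sum_comm]
    have : ∀ x ∈ t, ∑ v ∈ s, (t.card : ℝ)⁻¹ * W x v = (t.card : ℝ)⁻¹ := fun x hx => by
      rw [← Finset.mul_sum, (hW x hx).2.1, mul_one]
    rw [Finset.sum_congr rfl this, Finset.sum_const, nsmul_eq_mul]
    exact mul_inv_cancel₀ (inv_pos.1 hc).ne'
  have B2 : ∑ v ∈ s, B v • v = ∑ x ∈ t, (t.card : ℝ)⁻¹ • x := by
    simp only [B, Finset.sum_smul]
    rw [Finset.sum_comm]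
    refine Finset.sum_congr rfl fun x hx => ?_
    simp only [mul_smul]
    rw [← Finset.smul_sum, (hW x hx).2.2]
  have hus : s.filter (fun v => B v ≠ 0) ⊆ s := Finset.filter_subset _ _
  obtain ⟨h1, h2⟩ := osg_carrier_w B B0 B1 B2 _ hus (fun v hv => by simp [hv])
  refine ⟨_, hus, h1, h2, fun x hx => ?_⟩
  have hz : ∀ v ∈ s, v ∉ s.filter (fun v => B v ≠ 0) → W x v = 0 := by
    intro v hv hvu
    have hB : B v = 0 := by simpa [hv] using hvu
    have := (Finset.sum_eq_zero_iff_of_nonneg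
      (fun x hx => mul_nonneg hc.le ((hW x hx).1 v hv))).1 hB x hx
    exact (mul_eq_zero.1 this).resolve_left hc.ne'
  refine Finset.mem_convexHull'.2 ⟨W x, fun v hv => (hW x hx).1 v (hus hv), ?_, ?_⟩
  · rw [← (hW x hx).2.1]
    exact Finset.sum_subset hus hz
  · refine Eq.trans ?_ (hW x hx).2.2
    exact Finset.sum_subset hus fun v hv hvu => by rw [hz v hv hvu, zero_smul]

/-- If `L` is a locally finite simplicial complex in `ℝⁿ`, then the family of
open stars of points of `|L|` is a locally finite good open cover of `|L|`: each open star
is open in `|L|` and contains its center, and every nonempty intersection of finitely many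
open stars is contractible. -/
theorem openStars_good_cover
    {n : ℕ} (L : Geometry.SimplicialComplex ℝ (Fin n → ℝ))
    (hlf : ∀ x ∈ L.space, ∃ V : Set (Fin n → ℝ), IsOpen V ∧ x ∈ V ∧
      {s ∈ L.faces | (convexHull ℝ (s : Set (Fin n → ℝ)) ∩ V).Nonempty}.Finite) :
    (∀ x ∈ L.space, x ∈ openStar L x) ∧
    (∀ x ∈ L.space, IsOpen (Subtype.val ⁻¹' openStar L x : Set ↥L.space)) ∧
    (∀ y ∈ L.space, ∃ V : Set (Fin n → ℝ), IsOpen V ∧ y ∈ V ∧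
      {S : Set (Fin n → ℝ) | (∃ x ∈ L.space, S = openStar L x) ∧ (S ∩ V).Nonempty}.Finite) ∧
    (∀ t : Finset (Fin n → ℝ), ↑t ⊆ L.space → t.Nonempty →
      (⋂ x ∈ t, openStar L x).Nonempty →
      ContractibleSpace ↥(⋂ x ∈ t, openStar L x)) := by
  refine ⟨?_, ?_, ?_, ?_⟩
  · intro x hx
    exact (osg_iff L).2 ⟨hx, fun _ _ h => h⟩
  · intro x hx
    rw [isOpen_iff_mem_nhds]
    rintro ⟨p, hp⟩ hpx
    obtain ⟨V, hV, hpV, hfin⟩ := hlf p hp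
    have hpx' := ((osg_iff L).1 (show p ∈ openStar L x from hpx)).2
    let F : Set (Finset (Fin n → ℝ)) :=
      {s ∈ L.faces | (convexHull ℝ (s : Set (Fin n → ℝ)) ∩ V).Nonempty} ∩
        {s | x ∉ convexHull ℝ (s : Set (Fin n → ℝ))}
    have hF : F.Finite := hfin.subset Set.inter_subset_left
    have hC : IsClosed (⋃ s ∈ F, convexHull ℝ (s : Set (Fin n → ℝ))) :=
      hF.isClosed_biUnion fun s _ => (Set.Finite.isCompact_convexHull (𝕜 := ℝ) s.finite_toSet).isClosed
    have hO : IsOpen (V ∩ (⋃ s ∈ F, convexHull ℝ (s : Set (Fin n → ℝ)))ᶜ) :=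
      hV.inter hC.isOpen_compl
    refine Filter.mem_of_superset ((hO.preimage continuous_subtype_val).mem_nhds
      (show (⟨p, hp⟩ : L.space) ∈ _ from ⟨hpV, ?_⟩)) ?_
    · intro h
      obtain ⟨s, hs, hps⟩ := Set.mem_iUnion₂.1 h
      exact hs.2 (hpx' s hs.1.1 hps)
    · rintro ⟨q, hq⟩ ⟨hqV, hqC⟩
      refine (osg_iff L).2 ⟨hq, fun s hs hqs => ?_⟩
      by_contra hxs
      exact hqC (Set.mem_biUnion (show s ∈ F from ⟨⟨hs, q, hqs, hqV⟩, hxs⟩) hqs)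
  · intro y hy
    obtain ⟨V, hV, hyV, hfin⟩ := hlf y hy
    refine ⟨V, hV, hyV, ?_⟩
    refine ((hfin.biUnion (t := fun s => (s.powerset : Set (Finset (Fin n → ℝ))))
      (fun s _ => Finset.finite_toSet _)).image (fun u => {q | q ∈ L.space ∧ ∀ s ∈ L.faces,
        q ∈ convexHull ℝ (s : Set (Fin n → ℝ)) → u ⊆ s})).subset ?_
    rintro S ⟨⟨x, hx, rfl⟩, q, hq, hqV⟩
    obtain ⟨u, hu, hxu⟩ := osg_face L hx
    obtain ⟨s, ⟨hs, hxs⟩, hqs⟩ := Set.mem_iUnion₂.1 hq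
    refine ⟨u, Set.mem_biUnion (show s ∈ _ from ⟨hs, q, osg_hull hqs, hqV⟩) ?_, ?_⟩
    · simpa using osg_sub L hu hs hxu hxs
    · ext z
      rw [osg_iff]
      refine and_congr_right fun _ => forall₂_congr fun s' hs' => imp_congr_right fun _ =>
        ⟨fun h => convexHull_mono (by exact_mod_cast h) (osg_hull hxu), fun h =>
          osg_sub L hu hs' hxu h⟩
  · intro t htL ht hne
    obtain ⟨p₀, hp₀⟩ := hne
    have hp₀' := fun x hx => Set.mem_iInter₂.1 hp₀ x hx
    obtain ⟨x₀, hx₀⟩ := ht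
    obtain ⟨s₀, hs₀, hps₀⟩ := osg_face L ((osg_iff L).1 (hp₀' x₀ hx₀)).1
    obtain ⟨u, hus, hu, hbu, htu⟩ := osg_center (s := s₀) ⟨x₀, hx₀⟩
      (fun x hx => ((osg_iff L).1 (hp₀' x hx)).2 s₀ hs₀ (osg_hull hps₀))
    have huL := L.down_closed hs₀ hus hu
    have hbI : (∑ x ∈ t, (t.card : ℝ)⁻¹ • x) ∈ ⋂ x ∈ t, openStar L x :=
      Set.mem_iInter₂.2 fun x hx => osg_mem_of L huL hbu (htu x hx)
    refine StarConvex.contractibleSpace (x := ∑ x ∈ t, (t.card : ℝ)⁻¹ • x) ?_ ⟨_, hbI⟩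
    intro p hp α β hα hβ hαβ
    have hp' := fun x hx => Set.mem_iInter₂.1 hp x hx
    rcases hβ.eq_or_lt with rfl | hβ
    · have : α = 1 := by linarith
      simpa [this] using hbI
    obtain ⟨s, hs, hps⟩ := osg_face L ((osg_iff L).1 (hp' x₀ hx₀)).1
    have hts : ∀ x ∈ t, x ∈ convexHull ℝ (s : Set (Fin n → ℝ)) :=
      fun x hx => ((osg_iff L).1 (hp' x hx)).2 s hs (osg_hull hps)
    obtain ⟨u', hus', -, hbu', -⟩ := osg_center (s := s) ⟨x₀, hx₀⟩ hts
    have hbs := convexHull_mono (𝕜 := ℝ) (show (u' : Set (Fin n → ℝ)) ⊆ s by exact_mod_cast hus')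
      (osg_hull hbu')
    exact Set.mem_iInter₂.2 fun x hx =>
      osg_mem_of L hs (osg_seg hps hbs hα hβ hαβ) (hts x hx)
end

section
/- Let P be a finite simplicial complex in ℝⁿ, let O be an open subset of |P|, and let 𝒲 be an open cover of O. Then there exists a simplicial complex L in ℝⁿ whose geometric realization satisfies |L| = O, which is locally finite in O (every point of O has a neighbourhood meeting the convex hulls of only finitely many faces of L), and such that for every face s of L the closed simplex convexHull(s) is contained in some member of 𝒲. -/
open Set Geometry

structure CellSys {E : Type*} [NormedAddCommGroup E] [NormedSpace ℝ E]
    (X : Set E) (R : E → E → Prop) : Prop where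
  rfl' : ∀ x, R x x
  trans' : ∀ {x y z}, x ∈ X → R y x → R z y → R z x
  sub : ∀ {x y}, x ∈ X → R y x → y ∈ X
  conv : ∀ {x}, x ∈ X → Convex ℝ {y | R y x}
  comp : ∀ {x}, x ∈ X → IsCompact {y | R y x}
  opn : ∀ {x y} {t : ℝ}, x ∈ X → R y x → 0 < t → t ≤ 1 → R x (t • x + (1 - t) • y)
  ext' : ∀ {x b}, x ∈ X → R b x → R x b → ∃ ε : ℝ, 0 < ε ∧ R (x + ε • (x - b)) x

namespace CellSys

variable {E : Type*} [NormedAddCommGroup E] [NormedSpace ℝ E] {X : Set E} {R : E → E → Prop}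

theorem exists_reps (h : CellSys X R) : ∃ B : Set E, B ⊆ X ∧
    (∀ x ∈ X, ∃ b ∈ B, R b x ∧ R x b) ∧
    (∀ b ∈ B, ∀ b' ∈ B, R b b' → R b' b → b = b') := by
  let S : Setoid X :=
    { r := fun a b => R a b ∧ R b a
      iseqv := ⟨fun a => ⟨h.rfl' _, h.rfl' _⟩, fun h => ⟨h.2, h.1⟩,
        fun {a b c} h1 h2 => ⟨h.trans' c.2 h2.1 h1.1, h.trans' a.2 h1.2 h2.2⟩⟩ }
  refine ⟨range (fun q : Quotient S => (q.out : E)), ?_, ?_, ?_⟩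
  · rintro _ ⟨q, rfl⟩
    exact q.out.2
  · intro x hx
    refine ⟨_, ⟨(Quotient.mk S ⟨x, hx⟩), rfl⟩, ?_⟩
    exact Quotient.mk_out (s := S) ⟨x, hx⟩
  · rintro _ ⟨q, rfl⟩ _ ⟨q', rfl⟩ h1 h2
    have : q.out ≈ q'.out := ⟨h1, h2⟩
    have h3 := Quotient.out_equiv_out.1 this
    rw [h3]

/-- simplices of the barycentric subdivision -/
def simp (B : Set E) (R : E → E → Prop) : Set (Finset E) :=
  {s | s.Nonempty ∧ (s : Set E) ⊆ B ∧ ∀ x ∈ s, ∀ y ∈ s, R x y ∨ R y x}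

theorem exists_top (h : CellSys X R) {B : Set E} (hBX : B ⊆ X) (s : Finset E) (hs : s ∈ simp B R) :
    ∃ b ∈ s, ∀ y ∈ s, R y b := by
  obtain ⟨hne, hB, hc⟩ := hs
  induction hne using Finset.Nonempty.cons_induction with
  | singleton a => exact ⟨a, by simp, by simpa using h.rfl' a⟩
  | cons a s ha hne ih =>
    obtain ⟨b, hb, hb'⟩ := ih (fun x hx => hB (by simp_all)) (fun x hx y hy => hc x (by simp [hx]) y (by simp [hy]))
    rcases hc a (by simp) b (by simp [hb]) with h1 | h1
    · refine ⟨b, by simp [hb], fun y hy => ?_⟩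
      rcases Finset.mem_cons.1 hy with rfl | hy
      · exact h1
      · exact hb' y hy
    · refine ⟨a, by simp, fun y hy => ?_⟩
      rcases Finset.mem_cons.1 hy with rfl | hy
      · exact h.rfl' _
      · exact h.trans' (hBX (hB (by simp))) h1 (hb' y hy)

theorem hull_sub (h : CellSys X R) {s : Set E} {b : E} (hb : b ∈ X) (hs : ∀ y ∈ s, R y b) {y : E}
    (hy : y ∈ convexHull ℝ s) : R y b :=
  convexHull_min (fun y hy => hs y hy) (h.conv hb) hy

theorem inter_hull (h : CellSys X R) {B : Set E} (hBX : B ⊆ X)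
    (hanti : ∀ b ∈ B, ∀ b' ∈ B, R b b' → R b' b → b = b') (N : ℕ) :
    ∀ s ∈ simp B R, ∀ t ∈ simp B R, s.card + t.card ≤ N → ∀ x,
      x ∈ convexHull ℝ (s : Set E) → x ∈ convexHull ℝ (t : Set E) →
      x ∈ convexHull ℝ (s ∩ t : Set E) := by
  classical
  have key : ∀ s ∈ simp B R, ∀ x ∈ convexHull ℝ (s : Set E), ∃ b ∈ s, (∀ y ∈ s, R y b) ∧
      (x = b ∨ (s.erase b ∈ simp B R ∧ 
        ∃ y ∈ convexHull ℝ (s.erase b : Set E), ∃ w : ℝ, 0 ≤ w ∧ w < 1 ∧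
          x = w • b + (1 - w) • y ∧ R y b ∧ ¬ R b y)) := by
    intro s hs x hx
    obtain ⟨b, hb, hbt⟩ := h.exists_top hBX s hs
    refine ⟨b, hb, hbt, ?_⟩
    by_cases hne : (s.erase b).Nonempty
    · have he : s.erase b ∈ simp B R :=
        ⟨hne, fun x hx => hs.2.1 (Finset.mem_of_mem_erase hx),
          fun x hx y hy => hs.2.2 x (Finset.mem_of_mem_erase hx) y (Finset.mem_of_mem_erase hy)⟩
      rw [← Finset.insert_erase hb, Finset.coe_insert, convexHull_insert (by exact_mod_cast hne)] at hx
      simp only [convexJoin, mem_iUnion, mem_singleton_iff, exists_prop, exists_eq_left] at hx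
      obtain ⟨y, hy, w, w', hw, hw', hww, rfl⟩ := hx
      obtain rfl : w' = 1 - w := by linarith
      have hbX := hBX (hs.2.1 hb)
      rcases eq_or_lt_of_le (show w ≤ 1 by linarith) with rfl | hlt
      · left; simp
      · right
        refine ⟨he, y, by simpa using hy, w, hw, hlt, rfl, ?_, ?_⟩
        · exact h.hull_sub hbX (fun y hy => hbt y (Finset.mem_of_mem_erase hy)) hy
        · intro hby
          obtain ⟨c, hc, hct⟩ := h.exists_top hBX _ he
          have hcB := he.2.1 hc
          have hyc : R y c := h.hull_sub (hBX hcB) hct hy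
          have hbc : R b c := h.trans' (hBX hcB) hyc hby
          have hcs := Finset.mem_erase.1 hc
          exact hcs.1 (hanti c hcB b (hs.2.1 hb) (hbt c hcs.2) hbc)
    · left
      rw [Finset.not_nonempty_iff_eq_empty] at hne
      rw [← Finset.insert_erase hb, hne] at hx
      simpa using hx
  -- strict comparison
  have cmp : ∀ b ∈ X, ∀ y y' : E, ∀ w w' : ℝ, w < w' → w' < 1 → R y' b → ¬ R b y →
      w • b + (1 - w) • y = w' • b + (1 - w') • y' → False := by
    intro b hb y y' w w' hlt h1 hy' hby heq
    apply hby
    have hpos : (0:ℝ) < 1 - w := by linarith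
    have : y = ((w' - w) / (1 - w)) • b + (1 - (w' - w) / (1 - w)) • y' := by
      have e1 : (1 - w) • y = (w' - w) • b + (1 - w') • y' := by
        rw [sub_smul w' w, ← sub_eq_zero]
        rw [← sub_eq_zero] at heq
        rw [← heq]; abel
      have e2 : 1 - (w' - w) / (1 - w) = (1 - w') / (1 - w) := by field_simp; ring
      rw [e2, div_eq_inv_mul, div_eq_inv_mul, mul_smul, mul_smul, ← smul_add, ← e1, smul_smul,
        inv_mul_cancel₀ hpos.ne', one_smul]
    rw [this]
    refine h.opn hb hy' (div_pos (by linarith) hpos) ?_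
    rw [div_le_one hpos]; linarith
  induction N with
  | zero =>
    intro s hs t ht hc
    have := hs.1.card_pos
    omega
  | succ N ih =>
    intro s hs t ht hc x hxs hxt
    obtain ⟨b, hb, hbt, hcase⟩ := key s hs x hxs
    obtain ⟨b', hb', hbt', hcase'⟩ := key t ht x hxt
    have cs := Finset.card_erase_lt_of_mem hb
    have ct := Finset.card_erase_lt_of_mem hb'
    have hbX := hBX (hs.2.1 hb)
    have hbX' := hBX (ht.2.1 hb')
    have hxb : R x b := h.hull_sub hbX hbt hxs
    have hxb' : R x b' := h.hull_sub hbX' hbt' hxt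
    -- either go down or R b x
    have d1 : x ∈ convexHull ℝ (s ∩ t : Set E) ∨ R b x := by
      rcases hcase with rfl | ⟨he, y, hy, w, hw0, hw1, hx, hyb, hnb⟩
      · right; exact h.rfl' _
      · rcases eq_or_lt_of_le hw0 with rfl | hw0
        · left
          have : x = y := by simpa using hx
          subst this
          refine convexHull_mono ?_ (ih _ he t ht (by omega) x (by simpa using hy) hxt)
          exact inter_subset_inter_left _ (by simp)
        · right
          rw [hx]
          exact h.opn hbX hyb hw0 hw1.le
    have d2 : x ∈ convexHull ℝ (s ∩ t : Set E) ∨ R b' x := by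
      rcases hcase' with rfl | ⟨he, y, hy, w, hw0, hw1, hx, hyb, hnb⟩
      · right; exact h.rfl' _
      · rcases eq_or_lt_of_le hw0 with rfl | hw0
        · left
          have : x = y := by simpa using hx
          subst this
          refine convexHull_mono ?_ (ih s hs _ he (by omega) x hxs (by simpa using hy))
          exact inter_subset_inter_right _ (by simp)
        · right
          rw [hx]
          exact h.opn hbX' hyb hw0 hw1.le
    rcases d1 with d1 | d1
    · exact d1
    rcases d2 with d2 | d2
    · exact d2
    obtain rfl : b = b' := hanti b (hs.2.1 hb) b' (ht.2.1 hb') (h.trans' hbX' hxb' d1)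
      (h.trans' hbX hxb d2)
    have hbst : b ∈ (s ∩ t : Set E) := ⟨hb, hb'⟩
    rcases hcase with rfl | ⟨he, y, hy, w, hw0, hw1, hx, hyb, hnb⟩
    · exact subset_convexHull ℝ _ hbst
    rcases hcase' with rfl | ⟨he', y', hy', w', hw0', hw1', hx', hyb', hnb'⟩
    · exact subset_convexHull ℝ _ hbst
    have heq := hx.symm.trans hx'
    rcases lt_trichotomy w w' with hlt | rfl | hlt
    · exact (cmp b hbX y y' w w' hlt hw1' hyb' hnb heq).elim
    · have : y = y' := by
        have := add_left_cancel heq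
        exact smul_right_injective E (by linarith : (1 - w) ≠ 0) this
      subst this
      have hm := ih _ he _ he' (by omega) y (by simpa using hy) (by simpa using hy')
      rw [hx]
      refine (convex_convexHull ℝ _) (subset_convexHull ℝ _ hbst) (convexHull_mono ?_ hm) hw0
        (by linarith) (by ring)
      exact inter_subset_inter (by simp) (by simp)
    · exact (cmp b hbX y' y w' w hlt hw1 hyb hnb' heq.symm).elim

/-- The complex. -/
theorem exists_complex (h : CellSys X R) {B : Set E} (hBX : B ⊆ X)
    (hanti : ∀ b ∈ B, ∀ b' ∈ B, R b b' → R b' b → b = b') :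
    ∃ L : Geometry.SimplicialComplex ℝ E, L.faces = simp B R := by
  classical
  have hi : ∀ s ∈ simp B R, ∀ t ∈ simp B R,
      convexHull ℝ (s : Set E) ∩ convexHull ℝ (t : Set E) ⊆ convexHull ℝ (s ∩ t : Set E) :=
    fun s hs t ht x hx => h.inter_hull hBX hanti _ s hs t ht le_rfl x hx.1 hx.2
  have hdown : ∀ s ∈ simp B R, ∀ t : Finset E, t ⊆ s → t.Nonempty → t ∈ simp B R :=
    fun s hs t hts hne => ⟨hne, fun x hx => hs.2.1 (hts hx),
      fun x hx y hy => hs.2.2 x (hts hx) y (hts hy)⟩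
  refine ⟨{ faces := simp B R, indep := ?_, isRelLowerSet_faces := ?_,
            inter_subset_convexHull := fun hs ht => hi _ hs _ ht }, rfl⟩
  · intro s hs
    exact ⟨hs.1, fun t hts hne => hdown s hs t hts hne⟩
  · intro s hs
    by_contra hdep
    obtain ⟨I, x, hx1, hx2⟩ := Convex.radon_partition hdep
    let s1 : Finset E := s.filter (fun v => ∃ hv : v ∈ s, (⟨v, hv⟩ : s) ∈ I)
    let s2 : Finset E := s.filter (fun v => ∃ hv : v ∈ s, (⟨v, hv⟩ : s) ∈ Iᶜ)
    have e1 : ((↑) : s → E) '' I = (s1 : Set E) := by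
      ext v; simp [s1]
    have e2 : ((↑) : s → E) '' Iᶜ = (s2 : Set E) := by
      ext v; simp [s2]
    rw [e1] at hx1
    rw [e2] at hx2
    have n1 : s1.Nonempty := by
      have := convexHull_nonempty_iff.1 ⟨x, hx1⟩
      exact_mod_cast this
    have n2 : s2.Nonempty := by
      have := convexHull_nonempty_iff.1 ⟨x, hx2⟩
      exact_mod_cast this
    have := hi s1 (hdown s hs _ (Finset.filter_subset _ _) n1) s2
      (hdown s hs _ (Finset.filter_subset _ _) n2) ⟨hx1, hx2⟩
    rw [← e1, ← e2, ← image_inter Subtype.val_injective, inter_compl_self] at this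
    simp at this

theorem exists_simplex (h : CellSys X R) {B : Set E} (hBX : B ⊆ X)
    (hrep : ∀ x ∈ X, ∃ b ∈ B, R b x ∧ R x b)
    (hfin : ∀ x ∈ X, {v ∈ B | R v x}.Finite) (N : ℕ) :
    ∀ x ∈ X, {v ∈ B | R v x}.ncard ≤ N → ∃ s ∈ simp B R, (∀ v ∈ s, R v x) ∧
      x ∈ convexHull ℝ (s : Set E) := by
  classical
  induction N with
  | zero =>
    intro x hx hN
    obtain ⟨b, hb, hbx, hxb⟩ := hrep x hx
    have := (Set.ncard_eq_zero (hfin x hx)).1 (by omega)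
    have hm : b ∈ {v ∈ B | R v x} := ⟨hb, hbx⟩
    rw [this] at hm
    exact hm.elim
  | succ N ih =>
    intro x hx hN
    obtain ⟨b, hb, hbx, hxb⟩ := hrep x hx
    by_cases hxeq : x = b
    · subst hxeq
      exact ⟨{x}, ⟨by simp, by simpa using hb, by simpa using h.rfl' x⟩,
        by simpa using h.rfl' x, by simp⟩
    have hne : x - b ≠ 0 := sub_ne_zero.2 hxeq
    -- the maximal parameter
    let T : Set ℝ := {s | R (b + s • (x - b)) x}
    have hT1 : (1:ℝ) ∈ T := by simp [T, h.rfl']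
    have hcl : IsClosed T := by
      have : Continuous (fun s : ℝ => b + s • (x - b)) := by fun_prop
      exact (h.comp hx).isClosed.preimage this
    have hbd : BddAbove T := by
      obtain ⟨M, hM⟩ := (h.comp hx).isBounded.exists_norm_le
      refine ⟨(M + ‖b‖) / ‖x - b‖, fun s hs => ?_⟩
      have h1 := hM _ hs
      have h2 : ‖s • (x - b)‖ ≤ ‖b + s • (x - b)‖ + ‖b‖ := by
        have := norm_sub_le (b + s • (x - b)) b
        simpa using this
      rw [norm_smul] at h2
      rw [le_div_iff₀ (norm_pos_iff.2 hne)]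
      have := mul_le_mul_of_nonneg_right (Real.le_norm_self s) (norm_nonneg (x - b))
      linarith
    have hmem := hcl.csSup_mem ⟨1, hT1⟩ hbd
    set S := sSup T with hS
    have hS1 : 1 ≤ S := le_csSup hbd hT1
    set y := b + S • (x - b) with hy
    have hyx : R y x := hmem
    have hyX := h.sub hx hyx
    have hxy : ¬ R x y := by
      intro hxy
      obtain ⟨ε, hε, hR⟩ := h.ext' hyX (h.trans' hyX hxy hbx) (h.trans' (hBX hb) hxb hyx)
      have : S + ε * S ∈ T := by
        have h2 : R (y + ε • (y - b)) x := h.trans' hx hyx hR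
        have : y + ε • (y - b) = b + (S + ε * S) • (x - b) := by
          rw [hy]; simp only [add_sub_cancel_left]; rw [add_smul, mul_smul]; abel
        rw [this] at h2
        exact h2
      have := le_csSup hbd this
      have : 0 < ε * S := by positivity
      linarith
    have hlt : {v ∈ B | R v y} ⊂ {v ∈ B | R v x} := by
      refine ⟨fun v hv => ⟨hv.1, h.trans' hx hyx hv.2⟩, fun hsub => ?_⟩
      have := hsub (show b ∈ {v ∈ B | R v x} from ⟨hb, hbx⟩)
      exact hxy (h.trans' hyX this.2 hxb)
    have hcard := Set.ncard_lt_ncard hlt (hfin x hx)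
    obtain ⟨s, hs, hsy, hys⟩ := ih y hyX (by omega)
    have hvb : ∀ v ∈ s, R v b := fun v hv => h.trans' (hBX hb) (h.trans' (hBX hb) hxb hyx) (hsy v hv)
    refine ⟨insert b s, ⟨by simp, ?_, ?_⟩, ?_, ?_⟩
    · rw [Finset.coe_insert]; exact insert_subset hb hs.2.1
    · intro u hu v hv
      rcases Finset.mem_insert.1 hu with hu' | hu' <;> rcases Finset.mem_insert.1 hv with hv' | hv'
      · left; rw [hu', hv']; exact h.rfl' _
      · right; rw [hu']; exact hvb v hv'
      · left; rw [hv']; exact hvb u hu'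
      · exact hs.2.2 u hu' v hv'
    · intro v hv
      rcases Finset.mem_insert.1 hv with rfl | hv
      · exact hbx
      · exact h.trans' hx hbx (hvb v hv)
    · have hx' : x = (1 - S⁻¹) • b + S⁻¹ • y := by
        rw [hy, smul_add, smul_smul, inv_mul_cancel₀ (by linarith), sub_smul, one_smul, one_smul]
        abel
      rw [hx']
      refine (convex_convexHull ℝ _) (subset_convexHull ℝ _ (by simp)) (convexHull_mono (by simp) hys)
        ?_ (by positivity) (by ring)
      have := inv_le_one_of_one_le₀ hS1
      linarith

theorem main (h : CellSys X R)
    (hlf : ∀ y ∈ X, ∃ V : Set E, IsOpen V ∧ y ∈ V ∧ ∀ B ⊆ X,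
      (∀ b ∈ B, ∀ b' ∈ B, R b b' → R b' b → b = b') →
        {v ∈ B | ∃ z ∈ V, R z v}.Finite) :
    ∃ L : Geometry.SimplicialComplex ℝ E, L.space = X ∧
      (∀ y ∈ X, ∃ V : Set E, IsOpen V ∧ y ∈ V ∧
        {s ∈ L.faces | (convexHull ℝ (s : Set E) ∩ V).Nonempty}.Finite) ∧
      (∀ s ∈ L.faces, ∃ x ∈ X, ∀ y ∈ convexHull ℝ (s : Set E), R y x) := by
  classical
  obtain ⟨B, hBX, hrep, hanti⟩ := h.exists_reps
  obtain ⟨L, hL⟩ := h.exists_complex hBX hanti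
  have hfin : ∀ x ∈ X, {v ∈ B | R v x}.Finite := by
    intro x hx
    choose! V hVo hyV hVf using hlf
    obtain ⟨t, ht, hcov⟩ := (h.comp hx).elim_nhds_subcover V
      (fun y hy => (hVo y (h.sub hx hy)).mem_nhds (hyV y (h.sub hx hy)))
    refine Set.Finite.subset (t.finite_toSet.biUnion
      (fun y hy => hVf y (h.sub hx (ht y hy)) B hBX hanti)) ?_
    rintro v ⟨hvB, hvx⟩
    obtain ⟨y, hy, hvy⟩ := mem_iUnion₂.1 (hcov hvx)
    exact mem_iUnion₂.2 ⟨y, hy, hvB, v, hvy, h.rfl' v⟩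
  have htop : ∀ s ∈ L.faces, ∃ x ∈ B, (∀ y ∈ s, R y x) ∧ ∀ y ∈ convexHull ℝ (s : Set E), R y x := by
    intro s hs
    rw [hL] at hs
    obtain ⟨b, hb, hbt⟩ := h.exists_top hBX s hs
    exact ⟨b, hs.2.1 hb, hbt, fun y hy => h.hull_sub (hBX (hs.2.1 hb)) hbt hy⟩
  refine ⟨L, ?_, ?_, ?_⟩
  · ext x
    rw [SimplicialComplex.mem_space_iff]
    constructor
    · rintro ⟨s, hs, hx⟩
      obtain ⟨b, hb, -, hbt⟩ := htop s hs
      exact h.sub (hBX hb) (hbt x hx)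
    · intro hx
      obtain ⟨s, hs, -, hxs⟩ := h.exists_simplex hBX hrep hfin _ x hx le_rfl
      exact ⟨s, hL ▸ hs, hxs⟩
  · intro y hy
    obtain ⟨V, hVo, hyV, hVf⟩ := hlf y hy
    refine ⟨V, hVo, hyV, ?_⟩
    have hf1 := hVf B hBX hanti
    have hf2 : (⋃ v ∈ {v ∈ B | ∃ z ∈ V, R z v}, {u ∈ B | R u v}).Finite :=
      hf1.biUnion (fun v hv => hfin v (hBX hv.1))
    refine Set.Finite.subset hf2.toFinset.powerset.finite_toSet ?_
    rintro s ⟨hs, z, hzs, hzV⟩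
    obtain ⟨b, hb, hbs, hbt⟩ := htop s hs
    simp only [Finset.coe_powerset, mem_preimage, mem_powerset_iff, Finite.coe_toFinset]
    intro u hu
    exact mem_iUnion₂.2 ⟨b, ⟨hb, z, hzV, hbt z hzs⟩, (hL ▸ hs : s ∈ simp B R).2.1 hu, hbs u hu⟩
  · intro s hs
    obtain ⟨b, hb, -, hbt⟩ := htop s hs
    exact ⟨b, hBX hb, hbt⟩

end CellSys

section PPart

variable {E : Type*} [NormedAddCommGroup E] [NormedSpace ℝ E]

theorem exists_min_face (P : Geometry.SimplicialComplex ℝ E) {x : E} (hx : x ∈ P.space) :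
    ∃ u ∈ P.faces, ∃ w : E → ℝ, (∀ v ∈ u, 0 < w v) ∧ ∑ v ∈ u, w v = 1 ∧ ∑ v ∈ u, w v • v = x ∧
      ∀ s ∈ P.faces, x ∈ convexHull ℝ (s : Set E) → u ⊆ s := by
  classical
  have hex : ∃ k : ℕ, ∃ u ∈ P.faces, x ∈ convexHull ℝ (u : Set E) ∧ u.card = k := by
    obtain ⟨u, hu, hxu⟩ := SimplicialComplex.mem_space_iff.1 hx
    exact ⟨_, u, hu, hxu, rfl⟩
  obtain ⟨u, hu, hxu, hk⟩ := Nat.find_spec hex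
  have hmin : ∀ u' : Finset E, u' ⊆ u → x ∈ convexHull ℝ (u' : Set E) → u' = u := by
    intro u' hsub hx'
    have hne : u'.Nonempty := by
      have := convexHull_nonempty_iff.1 ⟨x, hx'⟩
      exact_mod_cast this
    have := Nat.find_min' hex ⟨u', P.down_closed hu hsub hne, hx', rfl⟩
    exact Finset.eq_of_subset_of_card_le hsub (by omega)
  obtain ⟨w, hw0, hw1, hwx⟩ := Finset.mem_convexHull'.1 hxu
  refine ⟨u, hu, w, ?_, hw1, hwx, ?_⟩
  · intro v hv
    refine lt_of_le_of_ne (hw0 v hv) fun h0 => ?_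
    have hmem : x ∈ convexHull ℝ ((u.erase v : Finset E) : Set E) := by
      refine Finset.mem_convexHull'.2 ⟨w, fun y hy => hw0 y (Finset.mem_of_mem_erase hy), ?_, ?_⟩
      · rw [Finset.sum_erase _ h0.symm, hw1]
      · rw [Finset.sum_erase _ (by rw [← h0, zero_smul]), hwx]
    have := hmin _ (Finset.erase_subset _ _) hmem
    rw [← this] at hv
    simp at hv
  · intro s hs hxs
    have h1 : x ∈ convexHull ℝ ((s ∩ u : Finset E) : Set E) := by
      rw [Finset.coe_inter]
      exact P.inter_subset_convexHull hs hu ⟨hxs, hxu⟩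
    have := hmin _ Finset.inter_subset_right h1
    rw [← this]
    exact Finset.inter_subset_left

/-- `y` lies in the smallest face of `x`. -/
def RP (P : Geometry.SimplicialComplex ℝ E) (y x : E) : Prop :=
  ∀ s ∈ P.faces, x ∈ convexHull ℝ (s : Set E) → y ∈ convexHull ℝ (s : Set E)

theorem RP.opn {P : Geometry.SimplicialComplex ℝ E} {x y : E} {t : ℝ} (hx : x ∈ P.space)
    (hy : RP P y x) (ht : 0 < t) (ht1 : t ≤ 1) : RP P x (t • x + (1 - t) • y) := by
  classical
  obtain ⟨u, hu, w, hw0, hw1, hwx, hmin⟩ := exists_min_face P hx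
  intro s hs hzs
  have hxu : x ∈ convexHull ℝ (u : Set E) :=
    Finset.mem_convexHull'.2 ⟨w, fun v hv => (hw0 v hv).le, hw1, hwx⟩
  have hyu := hy u hu hxu
  have hzu : t • x + (1 - t) • y ∈ convexHull ℝ (u : Set E) :=
    convex_convexHull ℝ _ hxu hyu ht.le (by linarith) (by ring)
  have hz := P.inter_subset_convexHull hs hu ⟨hzs, hzu⟩
  rw [← Finset.coe_inter] at hz
  obtain ⟨η, hη0, hη1, hηy⟩ := Finset.mem_convexHull'.1 hyu
  obtain ⟨ζ, hζ0, hζ1, hζz⟩ := Finset.mem_convexHull'.1 hz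
  have hus : u ⊆ s := by
    intro v hv
    by_contra hvs
    have hi := affineIndependent_iff.1 (P.indep hu) Finset.univ
      (fun a => t * w a + (1 - t) * η a - if (a : E) ∈ s ∩ u then ζ a else 0)
    have key : ∀ a : E → ℝ, ∑ i : u, a i = ∑ i ∈ u, a i := fun a => Finset.sum_coe_sort u a
    have key2 : ∀ a : E → E, ∑ i : u, a i = ∑ i ∈ u, a i := fun a => Finset.sum_coe_sort u a
    have hfil : u.filter (fun a => a ∈ s ∩ u) = s ∩ u := by
      ext a; simp
    have := hi ?_ ?_ ⟨v, hv⟩ (Finset.mem_univ _)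
    · have hv' : v ∉ s ∩ u := fun h => hvs (Finset.mem_inter.1 h).1
      simp only [hv', if_false] at this
      have h1 := mul_pos ht (hw0 v hv)
      have h2 := mul_nonneg (by linarith : 0 ≤ 1 - t) (hη0 v hv)
      linarith
    · rw [key (fun a => t * w a + (1 - t) * η a - if a ∈ s ∩ u then ζ a else 0)]
      rw [Finset.sum_sub_distrib, Finset.sum_add_distrib, ← Finset.mul_sum, ← Finset.mul_sum,
        ← Finset.sum_filter, hfil, hw1, hη1, hζ1]
      ring
    · rw [key2 (fun a => (t * w a + (1 - t) * η a - if a ∈ s ∩ u then ζ a else 0) • a)]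
      simp only [sub_smul _ (ite _ _ _), add_smul, mul_smul, ite_smul, zero_smul]
      rw [Finset.sum_sub_distrib, Finset.sum_add_distrib, ← Finset.smul_sum, ← Finset.smul_sum,
        ← Finset.sum_filter, hfil, hwx, hηy, hζz]
      simp
  exact convexHull_mono (by exact_mod_cast hus) hxu

open Filter Topology in
theorem RP.ext {P : Geometry.SimplicialComplex ℝ E} {x b : E} (hx : x ∈ P.space)
    (hb : RP P b x) : ∀ᶠ ε : ℝ in 𝓝[>] 0, RP P (x + ε • (x - b)) x := by
  classical
  obtain ⟨u, hu, w, hw0, hw1, hwx, hmin⟩ := exists_min_face P hx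
  have hxu : x ∈ convexHull ℝ (u : Set E) :=
    Finset.mem_convexHull'.2 ⟨w, fun v hv => (hw0 v hv).le, hw1, hwx⟩
  obtain ⟨η, hη0, hη1, hηy⟩ := Finset.mem_convexHull'.1 (hb u hu hxu)
  have hev : ∀ᶠ ε : ℝ in 𝓝 0, ∀ v ∈ u, 0 < w v + ε * (w v - η v) := by
    rw [Filter.eventually_all_finset]
    intro v hv
    have hc : Continuous (fun ε : ℝ => w v + ε * (w v - η v)) := by fun_prop
    exact continuousAt_const.eventually_lt hc.continuousAt (by simpa using hw0 v hv)
  filter_upwards [nhdsWithin_le_nhds hev] with ε hε s hs hxs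
  refine convexHull_mono (by exact_mod_cast hmin s hs hxs) (?_ : _ ∈ convexHull ℝ (u : Set E))
  refine Finset.mem_convexHull'.2 ⟨fun v => w v + ε * (w v - η v), fun v hv => (hε v hv).le, ?_, ?_⟩
  · rw [Finset.sum_add_distrib, ← Finset.mul_sum, Finset.sum_sub_distrib, hw1, hη1]; ring
  · simp only [add_smul, mul_smul, sub_smul]
    rw [Finset.sum_add_distrib, ← Finset.smul_sum, Finset.sum_sub_distrib, hwx, hηy]

end PPart

section Grid

variable {n : ℕ}

def GR (k : ℕ) (y x : Fin n → ℝ) : Prop :=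
  ∀ i, ∀ m : ℤ, ((m : ℝ) ≤ 2 ^ k * x i → (m : ℝ) ≤ 2 ^ k * y i) ∧
    (2 ^ k * x i ≤ (m : ℝ) → 2 ^ k * y i ≤ (m : ℝ))

def GS (k : ℕ) (x : Fin n → ℝ) : Set (Fin n → ℝ) :=
  {z | ∀ i, ∀ m : ℤ, ((m : ℝ) < 2 ^ k * x i → (m : ℝ) ≤ 2 ^ k * z i) ∧
    (2 ^ k * x i < (m : ℝ) → 2 ^ k * z i ≤ (m : ℝ))}

theorem GR.rfl' (k : ℕ) (x : Fin n → ℝ) : GR k x x := fun _ _ => ⟨id, id⟩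

theorem GR.trans' {k : ℕ} {x y z : Fin n → ℝ} (h1 : GR k y x) (h2 : GR k z y) : GR k z x :=
  fun i m => ⟨fun h => (h2 i m).1 ((h1 i m).1 h), fun h => (h2 i m).2 ((h1 i m).2 h)⟩

theorem GR.mono {j k : ℕ} (hjk : j ≤ k) {x y : Fin n → ℝ} (h : GR k y x) : GR j y x := by
  obtain ⟨d, rfl⟩ := Nat.exists_eq_add_of_le hjk
  intro i m
  have hp : (0:ℝ) < 2 ^ d := by positivity
  have e : ∀ a : ℝ, (2:ℝ) ^ (j + d) * a = 2 ^ d * (2 ^ j * a) := fun a => by ring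
  have := h i (2 ^ d * m)
  push_cast at this
  simp only [e, mul_le_mul_iff_right₀ hp] at this
  exact this

theorem GS.mono {k : ℕ} {x y : Fin n → ℝ} (h : GR k y x) : GS k x ⊆ GS k y := by
  intro z hz i m
  refine ⟨fun hm => (hz i m).1 ?_, fun hm => (hz i m).2 ?_⟩
  · by_contra hc
    exact absurd ((h i m).2 (not_lt.1 hc)) (not_le.2 hm)
  · by_contra hc
    exact absurd ((h i m).1 (not_lt.1 hc)) (not_le.2 hm)

theorem GR.sub_GS {k : ℕ} {x y : Fin n → ℝ} (h : GR k y x) : y ∈ GS k x :=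
  fun i m => ⟨fun hm => (h i m).1 hm.le, fun hm => (h i m).2 hm.le⟩

theorem GS.dist_le {k : ℕ} {x y : Fin n → ℝ} (h : y ∈ GS k x) (i : Fin n) :
    |2 ^ k * y i - 2 ^ k * x i| ≤ 1 := by
  have h1 := (h i (⌈2 ^ k * x i⌉ - 1)).1 (by
    have := Int.ceil_lt_add_one (2 ^ k * x i)
    push_cast; linarith)
  have h2 := (h i (⌊2 ^ k * x i⌋ + 1)).2 (by
    have := Int.lt_floor_add_one (2 ^ k * x i)
    push_cast; linarith)
  push_cast at h1 h2
  have h3 := Int.le_ceil (2 ^ k * x i)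
  have h4 := Int.floor_le (2 ^ k * x i)
  rw [abs_le]; constructor <;> linarith

theorem GS.sub_ball {k : ℕ} {x : Fin n → ℝ} : GS k x ⊆ Metric.closedBall x ((1 / 2) ^ k) := by
  intro y hy
  rw [Metric.mem_closedBall, dist_pi_le_iff (by positivity)]
  intro i
  have := GS.dist_le hy i
  rw [← mul_sub, abs_mul, abs_of_pos (by positivity : (0:ℝ) < 2 ^ k)] at this
  rw [Real.dist_eq, one_div, inv_pow, ← one_div, le_div_iff₀ (by positivity)]
  linarith

theorem GR.conv (k : ℕ) (x : Fin n → ℝ) : Convex ℝ {y | GR k y x} := by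
  intro y hy z hz a b ha hb hab i m
  simp only [Pi.add_apply, Pi.smul_apply, smul_eq_mul]
  constructor
  · intro hm
    have h1 := mul_le_mul_of_nonneg_left ((hy i m).1 hm) ha
    have h2 := mul_le_mul_of_nonneg_left ((hz i m).1 hm) hb
    have : (m : ℝ) = a * m + b * m := by rw [← add_mul, hab, one_mul]
    linarith
  · intro hm
    have h1 := mul_le_mul_of_nonneg_left ((hy i m).2 hm) ha
    have h2 := mul_le_mul_of_nonneg_left ((hz i m).2 hm) hb
    have : (m : ℝ) = a * m + b * m := by rw [← add_mul, hab, one_mul]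
    linarith

theorem GR.closed (k : ℕ) (x : Fin n → ℝ) : IsClosed {y | GR k y x} := by
  simp only [GR, ofPred_forall]
  refine isClosed_iInter fun i => isClosed_iInter fun m => ?_
  rw [ofPred_and]
  refine IsClosed.inter ?_ ?_
  · rw [ofPred_forall]
    exact isClosed_iInter fun _ => isClosed_le (by fun_prop) (by fun_prop)
  · rw [ofPred_forall]
    exact isClosed_iInter fun _ => isClosed_le (by fun_prop) (by fun_prop)

theorem GR.opn {k : ℕ} {x y : Fin n → ℝ} {t : ℝ} (h : GR k y x) (ht : 0 < t) (ht1 : t ≤ 1) :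
    GR k x (t • x + (1 - t) • y) := by
  intro i m
  simp only [Pi.add_apply, Pi.smul_apply, smul_eq_mul]
  constructor
  · intro hm
    by_contra hc
    have h1 := mul_lt_mul_of_pos_left (not_le.1 hc) ht
    have h2 := mul_le_mul_of_nonneg_left ((h i m).2 (not_le.1 hc).le) (by linarith : 0 ≤ 1 - t)
    linarith
  · intro hm
    by_contra hc
    have h1 := mul_lt_mul_of_pos_left (not_le.1 hc) ht
    have h2 := mul_le_mul_of_nonneg_left ((h i m).1 (not_le.1 hc).le) (by linarith : 0 ≤ 1 - t)
    linarith

open Filter Topology in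
theorem GR.ext {k : ℕ} {x b : Fin n → ℝ} (h : GR k b x) :
    ∀ᶠ ε : ℝ in 𝓝[>] 0, GR k (x + ε • (x - b)) x := by
  have hc : ∀ i, Continuous (fun ε : ℝ => 2 ^ k * (x i + ε * (x i - b i))) := fun i => by fun_prop
  have lo : ∀ i, ∀ᶠ ε : ℝ in 𝓝[>] 0, (⌊2 ^ k * x i⌋ : ℝ) ≤ 2 ^ k * (x i + ε * (x i - b i)) := by
    intro i
    rcases eq_or_lt_of_le (Int.floor_le (2 ^ k * x i)) with he | hlt
    · have h1 := (h i ⌊2 ^ k * x i⌋).1 he.le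
      have h2 := (h i ⌊2 ^ k * x i⌋).2 he.ge
      have : x i = b i := by
        have : (2:ℝ) ^ k * x i = 2 ^ k * b i := by linarith
        exact mul_left_cancel₀ (by positivity) this
      refine Eventually.of_forall fun ε => ?_
      rw [this]; simp [Int.floor_le]
    · refine nhdsWithin_le_nhds ?_
      filter_upwards [(continuousAt_const (y := (⌊2 ^ k * x i⌋ : ℝ))).eventually_lt
        ((hc i).continuousAt (x := 0)) (by simpa using hlt)] with ε hε using hε.le
  have hi : ∀ i, ∀ᶠ ε : ℝ in 𝓝[>] 0, 2 ^ k * (x i + ε * (x i - b i)) ≤ (⌈2 ^ k * x i⌉ : ℝ) := by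
    intro i
    rcases eq_or_lt_of_le (Int.le_ceil (2 ^ k * x i)) with he | hlt
    · have h1 := (h i ⌈2 ^ k * x i⌉).1 he.ge
      have h2 := (h i ⌈2 ^ k * x i⌉).2 he.le
      have : x i = b i := by
        have : (2:ℝ) ^ k * x i = 2 ^ k * b i := by linarith
        exact mul_left_cancel₀ (by positivity) this
      refine Eventually.of_forall fun ε => ?_
      rw [this]; simp [Int.le_ceil]
    · refine nhdsWithin_le_nhds ?_
      filter_upwards [((hc i).continuousAt (x := 0)).eventually_lt
        (continuousAt_const (y := (⌈2 ^ k * x i⌉ : ℝ))) (by simpa using hlt)] with ε hε using hε.le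
  filter_upwards [eventually_all.2 lo, eventually_all.2 hi] with ε h1 h2 i m
  simp only [Pi.add_apply, Pi.smul_apply, Pi.sub_apply, smul_eq_mul]
  constructor
  · intro hm
    exact le_trans (by exact_mod_cast Int.le_floor.2 hm) (h1 i)
  · intro hm
    exact le_trans (h2 i) (by exact_mod_cast Int.ceil_le.2 hm)

end Grid

/-- Let `P` be a finite simplicial complex in `ℝⁿ`, `O` an open subset of `|P|`
and `𝒲` an open cover of `O`. Then there is a simplicial complex `L` with `|L| = O`, locally
finite in `O`, whose closed simplexes are each contained in some member of `𝒲`. -/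
theorem triangulation_of_open_subset
    {n : ℕ} (P : Geometry.SimplicialComplex ℝ (Fin n → ℝ)) (hP : P.faces.Finite)
    (O : Set (Fin n → ℝ)) (hO : ∃ V : Set (Fin n → ℝ), IsOpen V ∧ O = V ∩ P.space)
    (𝒲 : Set (Set (Fin n → ℝ)))
    (h𝒲open : ∀ W ∈ 𝒲, ∃ V : Set (Fin n → ℝ), IsOpen V ∧ W = V ∩ O)
    (h𝒲cov : O ⊆ ⋃₀ 𝒲) :
    ∃ L : Geometry.SimplicialComplex ℝ (Fin n → ℝ),
      L.space = O ∧
      (∀ y ∈ O, ∃ V : Set (Fin n → ℝ), IsOpen V ∧ y ∈ V ∧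
        {s ∈ L.faces | (convexHull ℝ (s : Set (Fin n → ℝ)) ∩ V).Nonempty}.Finite) ∧
      (∀ s ∈ L.faces, ∃ W ∈ 𝒲, convexHull ℝ (s : Set (Fin n → ℝ)) ⊆ W) := by
  classical
  obtain ⟨V, hVo, rfl⟩ := hO
  -- good boxes
  let G : (Fin n → ℝ) → Set ℕ := fun x =>
    {k | ∃ W ∈ 𝒲, ∃ U : Set (Fin n → ℝ), W = U ∩ (V ∩ P.space) ∧ GS k x ⊆ U ∩ V}
  let ℓ : (Fin n → ℝ) → ℕ := fun x => sInf (G x)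
  have hball : ∀ y ∈ V ∩ P.space, ∃ r > 0, ∃ j : ℕ, ∀ z ∈ Metric.ball y r, j ∈ G z := by
    intro y hy
    obtain ⟨W, hW, hyW⟩ := h𝒲cov hy
    obtain ⟨U, hUo, rfl⟩ := h𝒲open W hW
    obtain ⟨r, hr, hsub⟩ := Metric.isOpen_iff.1 (hUo.inter hVo) y ⟨hyW.1, hy.1⟩
    obtain ⟨j, hj⟩ := exists_pow_lt_of_lt_one (half_pos hr) (by norm_num : (1 / 2 : ℝ) < 1)
    refine ⟨r / 2, half_pos hr, j, fun z hz => ⟨_, hW, U, rfl, ?_⟩⟩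
    refine GS.sub_ball.trans (Subset.trans ?_ hsub)
    apply Metric.closedBall_subset_ball'
    have := Metric.mem_ball.1 hz
    linarith
  have hGne : ∀ x ∈ V ∩ P.space, ℓ x ∈ G x := by
    intro x hx
    obtain ⟨r, hr, j, hj⟩ := hball x hx
    exact Nat.sInf_mem ⟨j, hj x (Metric.mem_ball_self hr)⟩
  have hGmono : ∀ {k x y}, GR k y x → k ∈ G y → k ∈ G x := by
    rintro k x y h ⟨W, hW, U, hU, hs⟩
    exact ⟨W, hW, U, hU, (GS.mono h).trans hs⟩
  have hlev : ∀ {x y}, y ∈ V ∩ P.space → GR (ℓ x) y x → ℓ x ≤ ℓ y := by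
    intro x y hy h
    by_contra hc
    have hc := not_le.1 hc
    have h1 := hGmono (h.mono hc.le) (hGne y hy)
    exact absurd (Nat.sInf_le h1) (not_le.2 hc)
  let R : (Fin n → ℝ) → (Fin n → ℝ) → Prop := fun y x => RP P y x ∧ GR (ℓ x) y x
  have hin : ∀ x ∈ V ∩ P.space, ∃ W ∈ 𝒲, W ⊆ V ∩ P.space ∧ ∀ y, R y x → y ∈ W := by
    intro x hx
    obtain ⟨W, hW, U, rfl, hs⟩ := hGne x hx
    refine ⟨_, hW, inter_subset_right, fun y hy => ?_⟩
    have h1 := hs hy.2.sub_GS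
    obtain ⟨s, hsP, hxs⟩ := SimplicialComplex.mem_space_iff.1 hx.2
    exact ⟨h1.1, h1.2, SimplicialComplex.mem_space_iff.2 ⟨s, hsP, hy.1 s hsP hxs⟩⟩
  have hsub : ∀ {x y}, x ∈ V ∩ P.space → R y x → y ∈ V ∩ P.space := by
    intro x y hx hy
    obtain ⟨W, -, hW, h⟩ := hin x hx
    exact hW (h y hy)
  have hconv : ∀ {x}, x ∈ V ∩ P.space → Convex ℝ {y | R y x} := by
    intro x hx
    refine Convex.inter ?_ (GR.conv _ _)
    intro y hy z hz a b ha hb hab s hs hxs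
    exact convex_convexHull ℝ _ (hy s hs hxs) (hz s hs hxs) ha hb hab
  have hcell : CellSys (V ∩ P.space) R :=
    { rfl' := fun x => ⟨fun _ _ h => h, GR.rfl' _ _⟩
      trans' := by
        intro x y z hx hy hz
        exact ⟨fun s hs h => hz.1 s hs (hy.1 s hs h),
          hy.2.trans' (hz.2.mono (hlev (hsub hx hy) hy.2))⟩
      sub := hsub
      conv := hconv
      comp := by
        intro x hx
        obtain ⟨s, hsP, hxs⟩ := SimplicialComplex.mem_space_iff.1 hx.2
        refine (s.finite_toSet.isCompact_convexHull ℝ).of_isClosed_subset ?_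
          (fun y hy => hy.1 s hsP hxs)
        refine IsClosed.inter ?_ (GR.closed _ _)
        have : {y | RP P y x} = ⋂ s ∈ P.faces, ⋂ (_ : x ∈ convexHull ℝ (s : Set (Fin n → ℝ))),
            convexHull ℝ (s : Set (Fin n → ℝ)) := by
          ext y; simp [RP]
        change IsClosed {y | RP P y x}
        rw [this]
        exact isClosed_iInter fun s => isClosed_iInter fun _ => isClosed_iInter fun _ =>
          (s.finite_toSet.isClosed_convexHull ℝ)
      opn := by
        intro x y t hx hy ht ht1
        have hz : R (t • x + (1 - t) • y) x :=
          hconv hx ⟨fun _ _ h => h, GR.rfl' _ _⟩ hy ht.le (by linarith) (by ring)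
        refine ⟨hy.1.opn hx.2 ht ht1, (hy.2.opn ht ht1).mono ?_⟩
        exact Nat.sInf_le (hGmono (hy.2.opn ht ht1) (hGne x hx))
      ext' := by
        intro x b hx hb _
        obtain ⟨ε, ⟨h1, h2⟩, h3⟩ :=
          (((hb.1.ext hx.2).and hb.2.ext).and self_mem_nhdsWithin).exists
        exact ⟨ε, h3, h1, h2⟩ }
  have hlf : ∀ y ∈ V ∩ P.space, ∃ V' : Set (Fin n → ℝ), IsOpen V' ∧ y ∈ V' ∧
      ∀ B ⊆ V ∩ P.space, (∀ b ∈ B, ∀ b' ∈ B, R b b' → R b' b → b = b') →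
        {v ∈ B | ∃ z ∈ V', R z v}.Finite := by
    intro y hy
    obtain ⟨r, hr, j, hj⟩ := hball y hy
    refine ⟨Metric.ball y r, Metric.isOpen_ball, Metric.mem_ball_self hr, fun B hBX hanti => ?_⟩
    obtain ⟨M, hM⟩ := exists_nat_gt (2 ^ j * (‖y‖ + r) + 1)
    let f : (Fin n → ℝ) → Set (Finset (Fin n → ℝ)) × ℕ × (Fin n → ℤ) × (Fin n → ℤ) := fun v =>
      ({s ∈ P.faces | v ∈ convexHull ℝ (s : Set (Fin n → ℝ))}, ℓ v,
        fun i => ⌊2 ^ ℓ v * v i⌋, fun i => ⌈2 ^ ℓ v * v i⌉)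
    refine Set.Finite.of_finite_image (f := f) ?_ ?_
    · have hfin : ((𝒫 P.faces) ×ˢ (Iic j ×ˢ
          ((Icc (fun _ => -(M:ℤ) - 1) (fun _ => (M:ℤ) + 1) : Set (Fin n → ℤ)) ×ˢ
          (Icc (fun _ => -(M:ℤ) - 1) (fun _ => (M:ℤ) + 1) : Set (Fin n → ℤ))))).Finite :=
        hP.powerset.prod ((finite_Iic j).prod ((finite_Icc _ _).prod (finite_Icc _ _)))
      refine hfin.subset ?_
      rintro _ ⟨v, ⟨hvB, z, hz, hzv⟩, rfl⟩
      have hvX := hBX hvB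
      have hzX := hsub hvX hzv
      have hl : ℓ v ≤ j := (hlev hzX hzv.2).trans (Nat.sInf_le (hj z hz))
      have hb : ∀ i, |2 ^ ℓ v * v i| < M := by
        intro i
        have d1 := GS.dist_le hzv.2.sub_GS i
        have d2 : |z i| ≤ ‖y‖ + r := by
          have e1 := norm_le_pi_norm z i
          rw [Real.norm_eq_abs] at e1
          have e2 := norm_le_norm_add_norm_sub' z y
          have e3 := mem_ball_iff_norm.1 hz
          linarith
        have d3 : |2 ^ ℓ v * z i| ≤ 2 ^ j * (‖y‖ + r) := by
          rw [abs_mul, abs_of_pos (by positivity : (0:ℝ) < 2 ^ ℓ v)]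
          have : (2:ℝ) ^ ℓ v ≤ 2 ^ j := pow_le_pow_right₀ (by norm_num) hl
          exact mul_le_mul this d2 (abs_nonneg _) (by positivity)
        have d4 := abs_sub_abs_le_abs_sub (2 ^ ℓ v * v i) (2 ^ ℓ v * z i)
        rw [abs_sub_comm] at d1
        linarith
      refine ⟨fun s hs => hs.1, hl, ⟨fun i => ?_, fun i => ?_⟩, ⟨fun i => ?_, fun i => ?_⟩⟩ <;>
        have := abs_lt.1 (hb i) <;> simp only [f]
      · rw [Int.le_floor]; push_cast; linarith
      · have h5 := Int.floor_le (2 ^ ℓ v * v i)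
        have : (⌊2 ^ ℓ v * v i⌋ : ℝ) ≤ M + 1 := by linarith
        exact_mod_cast this
      · have h5 := Int.le_ceil (2 ^ ℓ v * v i)
        have : -(M:ℝ) - 1 ≤ (⌈2 ^ ℓ v * v i⌉ : ℝ) := by linarith
        exact_mod_cast this
      · rw [Int.ceil_le]; push_cast; linarith
    · have hR : ∀ u v, f u = f v → R u v := by
        intro u v huv
        simp only [f, Prod.mk.injEq] at huv
        obtain ⟨e1, e2, e3, e4⟩ := huv
        rw [e2] at e3 e4
        refine ⟨fun s hs hv => ?_, fun i m => ⟨fun h => ?_, fun h => ?_⟩⟩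
        · have : s ∈ {s ∈ P.faces | v ∈ convexHull ℝ (s : Set (Fin n → ℝ))} := ⟨hs, hv⟩
          rw [← e1] at this
          exact this.2
        · rw [← Int.le_floor] at h ⊢
          rw [congrFun e3 i]; exact h
        · rw [← Int.ceil_le] at h ⊢
          rw [congrFun e4 i]; exact h
      intro u hu v hv huv
      exact hanti u hu.1 v hv.1 (hR u v huv) (hR v u huv.symm)
  obtain ⟨L, h1, h2, h3⟩ := hcell.main hlf
  refine ⟨L, h1, h2, fun s hs => ?_⟩
  obtain ⟨x, hx, hR⟩ := h3 s hs
  obtain ⟨W, hW, -, h⟩ := hin x hx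
  exact ⟨W, hW, fun y hy => h y (hR y hy)⟩
end
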